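/- arXiv:2109.12165 — 2 statements merged into one kernel-verified Lean document; each statement's English description precedes it below -/
import Mathlib

section
/- Fix an integer N̄ ≥ 0 and M ≥ 1. Let T > 0, let ϱ ∈ C^∞([0,T]×𝕋³) with ϱ ≥ ε₀ for some ε₀ > 0, and let m ∈ C^∞([0,T]×𝕋³; ℝ³). Let λ ≥ 1, δ ∈ (0,1] with λδ^{1/2} ≥ 1, and ℓ ∈ (0,1), and assume ‖m‖₀ ≤ M and ‖m‖₁ ≤ M λ δ^{1/2}. Set m_ℓ = P_{≤ℓ^{−1}} m (cutoff in the space variable) and define Q(m,m) = div( m_ℓ ⊗ m_ℓ / ϱ − P_{≤ℓ^{−1}}( m ⊗ m / ϱ ) ). Then there is a constant C depending only on N̄, M, ε₀, finitely many derivatives of ϱ, and the fixed cutoff function φ, such that for every integer N with 0 ≤ N ≤ N̄, ‖Q(m,m)‖_N ≤ C ℓ^{1−N} (λ δ^{1/2})². -/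
open MeasureTheory

noncomputable section

/-- Points of `ℝ³`. -/
abbrev V3 : Type := Fin 3 → ℝ

/-- The fundamental domain `[-π, π]³` of the torus `𝕋³`. -/
def T3 : Set V3 := Set.Icc (fun _ => -Real.pi) (fun _ => Real.pi)

/-- The `i`-th standard basis vector of `ℝ³`. -/
def e3 (i : Fin 3) : V3 := Pi.single i 1

/-- A time-dependent function on `ℝ³` is (`2π`-)periodic in space. -/
def PerSpaceT {α : Type*} (f : ℝ × V3 → α) : Prop :=
  ∀ (t : ℝ) (x : V3) (v : Fin 3 → ℤ), f (t, fun i => x i + 2 * Real.pi * v i) = f (t, x)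

/-- Partial derivative in the `i`-th space direction. -/
def pX {F : Type*} [NormedAddCommGroup F] [NormedSpace ℝ F]
    (i : Fin 3) (f : ℝ × V3 → F) (tx : ℝ × V3) : F :=
  fderiv ℝ (fun y => f (tx.1, y)) tx.2 (e3 i)

/-- The Euclidean norm on `ℝ³`. -/
def enorm3 (x : V3) : ℝ := Real.sqrt (∑ i, x i ^ 2)

/-- `Jof S` is the largest integer `J` with `2^J ≤ S`. -/
def Jof (S : ℝ) : ℤ := ⌊Real.logb 2 S⌋

/-- The `k`-th Fourier coefficient of a (`2π`-)periodic function on `ℝ³`. -/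
def fcoef (g : V3 → ℝ) (k : Fin 3 → ℤ) : ℂ :=
  (((2 * Real.pi) ^ (3 : ℕ))⁻¹ : ℝ) •
    ∫ x in T3, (g x : ℂ) * Complex.exp (-(Complex.I * ((∑ i, (k i : ℝ) * x i : ℝ) : ℂ)))

/-- The low-frequency cutoff `P_{≤S}` associated with the cutoff function `φ`. -/
def Pse (φ : V3 → ℝ) (S : ℝ) (g : V3 → ℝ) (x : V3) : ℝ :=
  (∑' k : Fin 3 → ℤ,
      ((φ (fun i => (k i : ℝ) / (2 : ℝ) ^ Jof S) : ℝ) : ℂ) * fcoef g k *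
        Complex.exp (Complex.I * ((∑ i, (k i : ℝ) * x i : ℝ) : ℂ))).re

/-- `P_{≤S}` applied in the space variable to a time-dependent function. -/
def PseT (φ : V3 → ℝ) (S : ℝ) (f : ℝ × V3 → ℝ) (tx : ℝ × V3) : ℝ :=
  Pse φ S (fun y => f (tx.1, y)) tx.2

/-- The hypotheses on the fixed cutoff function `φ`. -/
def IsCutoff (φ : V3 → ℝ) : Prop :=
  ContDiff ℝ (⊤ : ℕ∞) φ ∧ (∀ x y : V3, enorm3 x = enorm3 y → φ x = φ y) ∧
    (∀ x : V3, enorm3 x ≤ 1 → φ x = 1) ∧ (∀ x : V3, 2 ≤ enorm3 x → φ x = 0)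

/-- The commutator `[g, P_{≤ℓ⁻¹}] f = g · P_{≤ℓ⁻¹} f - P_{≤ℓ⁻¹}(g f)`. -/
def commMul (φ : V3 → ℝ) (ℓ : ℝ) (g f : ℝ × V3 → ℝ) (tx : ℝ × V3) : ℝ :=
  g tx * PseT φ ℓ⁻¹ f tx - PseT φ ℓ⁻¹ (fun s => g s * f s) tx

/-- The commutator `[v·∇, P_{≤ℓ⁻¹}] F = v·∇(P_{≤ℓ⁻¹}F) - P_{≤ℓ⁻¹}(v·∇F)`. -/
def commAdv (φ : V3 → ℝ) (ℓ : ℝ) (v : ℝ × V3 → V3) (F : ℝ × V3 → ℝ) (tx : ℝ × V3) : ℝ :=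
  (∑ i : Fin 3, v tx i * pX i (PseT φ ℓ⁻¹ F) tx)
    - PseT φ ℓ⁻¹ (fun s => ∑ i : Fin 3, v s i * pX i F s) tx

/-- The commutator `[v·∇, P_{>ℓ⁻¹}] F` with the high-frequency cutoff `P_{>S} = id - P_{≤S}`. -/
def commAdvHigh (φ : V3 → ℝ) (ℓ : ℝ) (v : ℝ × V3 → V3) (F : ℝ × V3 → ℝ) (tx : ℝ × V3) : ℝ :=
  (∑ i : Fin 3, v tx i * pX i (fun s => F s - PseT φ ℓ⁻¹ F s) tx)
    - ((∑ i : Fin 3, v tx i * pX i F tx)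
        - PseT φ ℓ⁻¹ (fun s => ∑ i : Fin 3, v s i * pX i F s) tx)

/-- `P_{≤ℓ⁻¹}` applied componentwise to a time-dependent vector field. -/
def PseV (φ : V3 → ℝ) (S : ℝ) (m : ℝ × V3 → V3) (tx : ℝ × V3) : V3 :=
  fun i => PseT φ S (fun s => m s i) tx

/-- The quadratic commutator
`Q(m,m) = div ( m_ℓ ⊗ m_ℓ / ϱ - P_{≤ℓ⁻¹}( m ⊗ m / ϱ ) )` with `m_ℓ = P_{≤ℓ⁻¹} m`. -/
def Qcomm (φ : V3 → ℝ) (ℓ : ℝ) (ϱ : ℝ × V3 → ℝ) (m : ℝ × V3 → V3)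
    (tx : ℝ × V3) : V3 :=
  fun i => ∑ j : Fin 3,
    pX j (fun s => PseV φ ℓ⁻¹ m s i * PseV φ ℓ⁻¹ m s j / ϱ s
        - PseT φ ℓ⁻¹ (fun s' => m s' i * m s' j / ϱ s') s) tx

/-!
The cutoff `P_{≤ℓ⁻¹}` is convolution with an even Schwartz kernel `K` of mass one, rescaled to a
width `s` comparable to `ℓ`, so the theorem is a commutator estimate for mollification, in the
spirit of Constantin, E and Titi.

Fix a point `x` and write each of `m_i`, `m_j` and `r = ϱ⁻¹` as its value at `x` plus a fluctuation.
In `r P(m_i) P(m_j) - P(m_i m_j r)` the terms of order zero and one cancel, except for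
`m_i(x) m_j(x) (r - P r)`, which is `O(s²)` because the first moments of `K` vanish. Every other
term contains two fluctuations, each of which contributes a factor `s` near `x`. Derivatives of
mollified quantities fall on the kernel at the price of a factor `s⁻¹` each; with the additional
one from the divergence, the `n`-th derivative has size `s² s⁻¹⁻ⁿ = s¹⁻ⁿ`.
-/

open Filter Topology Set
open scoped NNReal ContDiff SchwartzMap LineDeriv FourierTransform ComplexConjugate

section BoundedSmooth

variable {V F : Type*} [NormedAddCommGroup V] [NormedSpace ℝ V]
  [NormedAddCommGroup F] [NormedSpace ℝ F]

/-- Smooth functions all of whose derivatives are bounded on the whole space. -/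
structure IsBoundedSmooth (f : V → F) : Prop where
  contDiff : ContDiff ℝ ∞ f
  exists_bound : ∀ n : ℕ, ∃ C : ℝ, ∀ x, ‖iteratedFDeriv ℝ n f x‖ ≤ C

theorem isBoundedSmooth_const (c : F) : IsBoundedSmooth fun _ : V => c where
  contDiff := contDiff_const
  exists_bound n := by
    rcases n with _ | n
    · exact ⟨‖c‖, fun x => by simp⟩
    · exact ⟨0, fun x => by simp [iteratedFDeriv_const_of_ne n.succ_ne_zero]⟩

theorem IsBoundedSmooth.add {f g : V → F} (hf : IsBoundedSmooth f) (hg : IsBoundedSmooth g) :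
    IsBoundedSmooth (f + g) where
  contDiff := hf.contDiff.add hg.contDiff
  exists_bound n := by
    obtain ⟨A, hA⟩ := hf.exists_bound n
    obtain ⟨B, hB⟩ := hg.exists_bound n
    refine ⟨A + B, fun x => ?_⟩
    rw [iteratedFDeriv_add_apply (hf.contDiff.of_le (mod_cast le_top)).contDiffAt
      (hg.contDiff.of_le (mod_cast le_top)).contDiffAt]
    exact (norm_add_le _ _).trans (add_le_add (hA x) (hB x))

theorem IsBoundedSmooth.mul {f g : V → ℝ} (hf : IsBoundedSmooth f) (hg : IsBoundedSmooth g) :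
    IsBoundedSmooth (f * g) where
  contDiff := hf.contDiff.mul hg.contDiff
  exists_bound n := by
    choose A hA using hf.exists_bound
    choose B hB using hg.exists_bound
    refine ⟨∑ i ∈ Finset.range (n + 1), (n.choose i : ℝ) * A i * B (n - i), fun x => ?_⟩
    refine (norm_iteratedFDeriv_mul_le hf.contDiff hg.contDiff x (mod_cast le_top)).trans
      (Finset.sum_le_sum fun i _ => ?_)
    have hAi : 0 ≤ A i := (norm_nonneg _).trans (hA i x)
    gcongr
    exacts [hA i x, hB (n - i) x]

theorem IsBoundedSmooth.exists_norm_le {f : V → F} (hf : IsBoundedSmooth f) :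
    ∃ C : ℝ, ∀ x, ‖f x‖ ≤ C := by
  simpa only [norm_iteratedFDeriv_zero] using hf.exists_bound 0

theorem IsBoundedSmooth.differentiable_iteratedFDeriv {f : V → F} (hf : IsBoundedSmooth f)
    (n : ℕ) : Differentiable ℝ (iteratedFDeriv ℝ n f) :=
  hf.contDiff.differentiable_iteratedFDeriv (mod_cast ENat.natCast_lt_top n)

theorem norm_sub_sub_fderiv_le_of_lipschitz_fderiv {f : V → F} (hf : Differentiable ℝ f)
    {C : ℝ≥0} (hC : LipschitzWith C (fderiv ℝ f)) (x v : V) :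
    ‖f (x + v) - f x - fderiv ℝ f x v‖ ≤ C * ‖v‖ ^ 2 := by
  have hbound : ∀ z ∈ Metric.closedBall x ‖v‖, ‖fderiv ℝ f z - fderiv ℝ f x‖ ≤ C * ‖v‖ := by
    intro z hz
    rw [mem_closedBall_iff_norm] at hz
    exact (hC.norm_sub_le z x).trans (by gcongr)
  have hmv := (convex_closedBall x ‖v‖).norm_image_sub_le_of_norm_fderiv_le' (𝕜 := ℝ)
    (fun z _ => hf z) hbound (Metric.mem_closedBall_self (norm_nonneg v)) (y := x + v) (by simp)
  simpa only [add_sub_cancel_left, pow_two, mul_assoc] using hmv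

variable (V) in
/-- The algebra of real functions all of whose derivatives are bounded. -/
def boundedSmooth : Subalgebra ℝ (V → ℝ) where
  carrier := {f | IsBoundedSmooth f}
  mul_mem' hf hg := hf.mul hg
  add_mem' hf hg := hf.add hg
  algebraMap_mem' c := isBoundedSmooth_const c

end BoundedSmooth

section Mollify

variable {V F : Type*} [NormedAddCommGroup V] [NormedSpace ℝ V] [MeasureSpace V]
  [NormedAddCommGroup F] [NormedSpace ℝ F]

/-- The average `x ↦ ∫ K(y) f(x - s y) dy` of `f` against the kernel `K` rescaled to width `s`. -/
def mollify (K : V → ℝ) (s : ℝ) (f : V → F) (x : V) : F := ∫ y, K y • f (x - s • y)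

theorem mollify_linearIsometryEquiv_comp {G : Type*} [NormedAddCommGroup G] [NormedSpace ℝ G]
    (L : F ≃ₗᵢ[ℝ] G) (K : V → ℝ) (s : ℝ) (f : V → F) :
    mollify K s (L ∘ f) = L ∘ mollify K s f := by
  ext x
  simp only [mollify, Function.comp_apply, ← map_smul]
  exact L.toContinuousLinearEquiv.integral_comp_comm _

theorem mollify_ofReal (K : V → ℝ) (s : ℝ) (g : V → ℝ) (x : V) :
    mollify K s (fun y => (g y : ℂ)) x = ((mollify K s g x : ℝ) : ℂ) := by
  rw [mollify, mollify, ← integral_complex_ofReal]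
  simp

/-- The absolute moment of order `p` of the `n`-th derivative of a kernel. -/
def kernelMoment (K : V → ℝ) (p n : ℕ) : ℝ := ∫ y, ‖y‖ ^ p * ‖iteratedFDeriv ℝ n K y‖

theorem kernelMoment_nonneg (K : V → ℝ) (p n : ℕ) : 0 ≤ kernelMoment K p n :=
  integral_nonneg fun y => by positivity

variable [FiniteDimensional ℝ V] [BorelSpace V]

theorem integrable_mollify_integrand {K : V → ℝ} (hK : Integrable K) {f : V → F}
    (hf : Continuous f) {C : ℝ} (hC : ∀ x, ‖f x‖ ≤ C) (s : ℝ) (x : V) :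
    Integrable fun y => K y • f (x - s • y) := by
  have := FiniteDimensional.proper_real V
  refine hK.smul_bdd C ?_ (ae_of_all _ fun y => hC _)
  exact (hf.comp (by fun_prop)).aestronglyMeasurable

theorem hasFDerivAt_mollify {K : V → ℝ} (hK : Integrable K) {f : V → F}
    (hf : ContDiff ℝ 1 f) {C₀ C₁ : ℝ} (hC₀ : ∀ x, ‖f x‖ ≤ C₀) (hC₁ : ∀ x, ‖fderiv ℝ f x‖ ≤ C₁)
    (s : ℝ) (x : V) : HasFDerivAt (mollify K s f) (mollify K s (fderiv ℝ f) x) x := by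
  have hf' : Continuous (fderiv ℝ f) := hf.continuous_fderiv one_ne_zero
  refine hasFDerivAt_integral_of_dominated_of_fderiv_le (bound := fun y => ‖K y‖ * C₁)
    (F := fun x y => K y • f (x - s • y)) (F' := fun x y => K y • fderiv ℝ f (x - s • y))
    univ_mem (.of_forall fun z => ?_) (integrable_mollify_integrand hK hf.continuous hC₀ s x)
    (integrable_mollify_integrand hK hf' hC₁ s x).aestronglyMeasurable
    (ae_of_all _ fun y z _ => ?_) (hK.norm.mul_const _) (ae_of_all _ fun y z _ => ?_)
  · exact (integrable_mollify_integrand hK hf.continuous hC₀ s z).aestronglyMeasurable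
  · rw [norm_smul]
    exact mul_le_mul_of_nonneg_left (hC₁ _) (norm_nonneg _)
  · exact ((hf.differentiable one_ne_zero _).hasFDerivAt.comp z
      ((hasFDerivAt_id z).sub_const (s • y))).const_smul (K y)

theorem hasFDerivAt_mollify_iteratedFDeriv {K : V → ℝ} (hK : Integrable K) {f : V → F}
    (hf : IsBoundedSmooth f) (s : ℝ) (n : ℕ) (x : V) :
    HasFDerivAt (mollify K s (iteratedFDeriv ℝ n f))
      (mollify K s (fderiv ℝ (iteratedFDeriv ℝ n f)) x) x := by
  obtain ⟨C₀, hC₀⟩ := hf.exists_bound n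
  obtain ⟨C₁, hC₁⟩ := hf.exists_bound (n + 1)
  refine hasFDerivAt_mollify hK (hf.contDiff.iteratedFDeriv_right (mod_cast le_top)) hC₀
    (C₁ := C₁) (fun y => ?_) s x
  exact norm_fderiv_iteratedFDeriv.trans_le (hC₁ y)

theorem iteratedFDeriv_mollify {K : V → ℝ} (hK : Integrable K) {f : V → F}
    (hf : IsBoundedSmooth f) (s : ℝ) (n : ℕ) :
    iteratedFDeriv ℝ n (mollify K s f) = mollify K s (iteratedFDeriv ℝ n f) := by
  induction n with
  | zero =>
    exact (mollify_linearIsometryEquiv_comp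
      (continuousMultilinearCurryFin0 ℝ V F).symm K s f).symm
  | succ n ih =>
    have hfderiv : fderiv ℝ (mollify K s (iteratedFDeriv ℝ n f))
        = mollify K s (fderiv ℝ (iteratedFDeriv ℝ n f)) :=
      funext fun x => (hasFDerivAt_mollify_iteratedFDeriv hK hf s n x).fderiv
    rw [iteratedFDeriv_succ_eq_comp_left, iteratedFDeriv_succ_eq_comp_left, ih, hfderiv]
    exact (mollify_linearIsometryEquiv_comp (F := V →L[ℝ] V [×n]→L[ℝ] F)
      (G := V [×(n + 1)]→L[ℝ] F) (continuousMultilinearCurryLeftEquiv ℝ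
      (fun _ : Fin (n + 1) => V) F).symm K s _).symm

theorem IsBoundedSmooth.mollify {K : V → ℝ} (hK : Integrable K) {f : V → F}
    (hf : IsBoundedSmooth f) (s : ℝ) : IsBoundedSmooth (mollify K s f) where
  contDiff := by
    refine contDiff_of_differentiable_iteratedFDeriv fun n _ => ?_
    rw [iteratedFDeriv_mollify hK hf]
    exact fun x => (hasFDerivAt_mollify_iteratedFDeriv hK hf s n x).differentiableAt
  exists_bound n := by
    obtain ⟨C, hC⟩ := hf.exists_bound n
    refine ⟨∫ y, ‖K y‖ * C, fun x => ?_⟩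
    rw [iteratedFDeriv_mollify hK hf]
    refine norm_integral_le_of_norm_le (hK.norm.mul_const C) (ae_of_all _ fun y => ?_)
    rw [norm_smul]
    exact mul_le_mul_of_nonneg_left (hC _) (norm_nonneg _)

section Schwartz

variable (K : 𝓢(V, ℝ)) {f : V → ℝ} [(volume : Measure V).IsAddHaarMeasure]

theorem mollify_lineDerivOp (hf : IsBoundedSmooth f) (s : ℝ) (v x : V) :
    mollify (∂_{v} K : 𝓢(V, ℝ)) s f x = s * fderiv ℝ (mollify K s f) x v := by
  obtain ⟨C₀, hC₀⟩ := hf.exists_norm_le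
  obtain ⟨C₁, hC₁⟩ : ∃ C, ∀ x, ‖fderiv ℝ f x‖ ≤ C := by
    simpa only [norm_iteratedFDeriv_one] using hf.exists_bound 1
  have hf' : ContDiff ℝ 1 f := hf.contDiff.of_le (mod_cast le_top)
  have hderiv (y : V) :
      HasFDerivAt (fun y => f (x - s • y)) (-(s • fderiv ℝ f (x - s • y))) y := by
    have hinner : HasFDerivAt (fun y : V => x - s • y) (-(s • ContinuousLinearMap.id ℝ V)) y :=
      ((hasFDerivAt_id y).const_smul s).const_sub x
    refine ((hf'.differentiable one_ne_zero _).hasFDerivAt.comp y hinner).congr_fderiv ?_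
    ext v
    simp
  have hint : Integrable fun y => K y • fderiv ℝ f (x - s • y) :=
    integrable_mollify_integrand K.integrable (hf'.continuous_fderiv one_ne_zero) hC₁ s x
  have hparts : ∫ y, K y * -(s * fderiv ℝ f (x - s • y) v)
      = -∫ y, fderiv ℝ K y v * f (x - s • y) :=
    integral_bilinear_hasFDerivAt_right_eq_neg_left_of_integrable
      (B := ContinuousLinearMap.mul ℝ ℝ)
      (integrable_mollify_integrand (∂_{v} K : 𝓢(V, ℝ)).integrable hf'.continuous hC₀ s x)
      (((hint.apply_continuousLinearMap v).const_mul (-s)).congr (ae_of_all _ fun y => by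
        simp only [smul_apply, neg_apply, ContinuousLinearMap.mul_apply', smul_eq_mul]
        ring))
      (integrable_mollify_integrand K.integrable hf'.continuous hC₀ s x)
      (fun y _ => K.hasFDerivAt y) (fun y _ => hderiv y)
  calc mollify (∂_{v} K : 𝓢(V, ℝ)) s f x
      = ∫ y, s * (K y * fderiv ℝ f (x - s • y) v) := by
        rw [← neg_inj, ← integral_neg]
        refine hparts.symm.trans (integral_congr_ae (ae_of_all _ fun y => ?_))
        ring
    _ = s * fderiv ℝ (mollify K s f) x v := by
        rw [integral_const_mul, (hasFDerivAt_mollify K.integrable hf' hC₀ hC₁ s x).fderiv,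
          mollify, ContinuousLinearMap.integral_apply hint]
        rfl

theorem mollify_iteratedLineDerivOp (hf : IsBoundedSmooth f) (s : ℝ) {n : ℕ} (m : Fin n → V)
    (x : V) : mollify (∂^{m} K : 𝓢(V, ℝ)) s f x
      = s ^ n * iteratedFDeriv ℝ n (mollify K s f) x m := by
  induction n generalizing x with
  | zero => simp
  | succ n ih =>
    have hP := hf.mollify K.integrable s
    have hih : mollify (∂^{Fin.tail m} K : 𝓢(V, ℝ)) s f
        = fun x => s ^ n * iteratedFDeriv ℝ n (mollify K s f) x (Fin.tail m) :=
      funext fun x => ih _ x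
    rw [LineDeriv.iteratedLineDerivOp_succ_left, mollify_lineDerivOp _ hf, hih,
      fderiv_const_mul ((hP.differentiable_iteratedFDeriv n x).continuousMultilinear_apply_const _),
      iteratedFDeriv_succ_apply_left, smul_apply,
      fderiv_continuousMultilinear_apply_const_apply (hP.differentiable_iteratedFDeriv n x),
      smul_eq_mul, pow_succ']
    ring

theorem norm_iteratedFDeriv_mollify_le (hf : IsBoundedSmooth f) {s : ℝ} (hs : 0 ≤ s) {A : ℝ}
    (hA₀ : 0 ≤ A) {p : ℕ} {x : V} (hA : ∀ y, |f y| ≤ A * ‖y - x‖ ^ p) (n : ℕ) :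
    s ^ n * ‖iteratedFDeriv ℝ n (mollify K s f) x‖ ≤ A * s ^ p * kernelMoment K p n := by
  have hmoment : Integrable fun y => ‖y‖ ^ p * ‖iteratedFDeriv ℝ n K y‖ :=
    K.integrable_pow_mul_iteratedFDeriv _ p n
  have hA' (y : V) : |f (x - s • y)| ≤ A * s ^ p * ‖y‖ ^ p := by
    refine (hA _).trans_eq ?_
    rw [sub_sub_cancel_left, norm_neg, norm_smul, Real.norm_of_nonneg hs, mul_pow, mul_assoc]
  have hK (m : Fin n → V) (y : V) : |(∂^{m} K : 𝓢(V, ℝ)) y|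
      ≤ ‖iteratedFDeriv ℝ n K y‖ * ∏ i, ‖m i‖ := by
    rw [SchwartzMap.iteratedLineDerivOp_eq_iteratedFDeriv]
    exact (iteratedFDeriv ℝ n K y).le_opNorm m
  have hbound : 0 ≤ A * s ^ p * kernelMoment K p n :=
    mul_nonneg (by positivity) (kernelMoment_nonneg K p n)
  rw [← Real.norm_of_nonneg (pow_nonneg hs n), ← norm_smul]
  refine ContinuousMultilinearMap.opNorm_le_bound hbound fun m => ?_
  rw [smul_apply, smul_eq_mul, ← mollify_iteratedLineDerivOp K hf, kernelMoment,
    ← integral_const_mul, ← integral_mul_const]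
  refine norm_integral_le_of_norm_le ((hmoment.const_mul _).mul_const _) (ae_of_all _ fun y => ?_)
  calc ‖(∂^{m} K : 𝓢(V, ℝ)) y • f (x - s • y)‖
      ≤ (‖iteratedFDeriv ℝ n K y‖ * ∏ i, ‖m i‖) * (A * s ^ p * ‖y‖ ^ p) := by
        rw [norm_smul]
        exact mul_le_mul (hK m y) (hA' y) (norm_nonneg _) (by positivity)
    _ = A * s ^ p * (‖y‖ ^ p * ‖iteratedFDeriv ℝ n K y‖) * ∏ i, ‖m i‖ := by ring

end Schwartz

theorem norm_sub_mollify_le [CompleteSpace F] [(volume : Measure V).IsAddHaarMeasure]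
    {K : 𝓢(V, ℝ)} (hmass : ∫ y, K y = 1) (hmean : ∫ y, K y • y = 0) {f : V → F}
    (hf : Differentiable ℝ f) {B : ℝ} (hB : ∀ x, ‖f x‖ ≤ B) {C : ℝ≥0}
    (hC : LipschitzWith C (fderiv ℝ f)) (s : ℝ) (x : V) :
    ‖f x - mollify K s f x‖ ≤ C * s ^ 2 * kernelMoment K 2 0 := by
  have hKf : Integrable fun y => K y • f (x - s • y) :=
    integrable_mollify_integrand K.integrable hf.continuous hB s x
  have hKy : Integrable fun y => K y • y := by
    refine (K.integrable_pow_mul volume 1).mono' (by fun_prop) (ae_of_all _ fun y => ?_)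
    rw [norm_smul, pow_one, mul_comm]
  have hKDf : Integrable fun y => K y • fderiv ℝ f x (s • y) := by
    simpa only [Function.comp_def, smul_apply, map_smul, smul_comm s] using
      (s • fderiv ℝ f x).integrable_comp hKy
  have hlin : ∫ y, K y • fderiv ℝ f x (s • y) = 0 := by
    have := (s • fderiv ℝ f x).integral_comp_comm hKy
    simpa only [smul_apply, map_smul, smul_comm s, hmean, map_zero] using this
  have hrem : f x - mollify K s f x
      = ∫ y, K y • (f x - f (x - s • y) - fderiv ℝ f x (s • y)) := by
    have hKfx : Integrable fun y => K y • f x := K.integrable.smul_const _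
    simp only [smul_sub]
    have hdiff : Integrable fun y => K y • f x - K y • f (x - s • y) := hKfx.sub hKf
    rw [integral_sub hdiff hKDf, integral_sub hKfx hKf, hlin, sub_zero, integral_smul_const, hmass,
      one_smul, mollify]
  rw [hrem, kernelMoment, ← integral_const_mul]
  refine norm_integral_le_of_norm_le ((K.integrable_pow_mul_iteratedFDeriv _ 2 0).const_mul _)
    (ae_of_all _ fun y => ?_)
  have htaylor : ‖f x - f (x - s • y) - fderiv ℝ f x (s • y)‖ ≤ C * (s ^ 2 * ‖y‖ ^ 2) := by
    have := norm_sub_sub_fderiv_le_of_lipschitz_fderiv hf hC x (-(s • y))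
    rwa [← norm_neg, norm_neg (s • y), norm_smul, mul_pow, Real.norm_eq_abs, sq_abs, map_neg,
      ← sub_eq_add_neg, sub_neg_eq_add, neg_add, neg_sub, ← sub_eq_add_neg] at this
  calc ‖K y • (f x - f (x - s • y) - fderiv ℝ f x (s • y))‖
      ≤ ‖K y‖ * (C * (s ^ 2 * ‖y‖ ^ 2)) := by
        rw [norm_smul]
        gcongr
    _ = C * s ^ 2 * (‖y‖ ^ 2 * ‖iteratedFDeriv ℝ 0 K y‖) := by
        rw [norm_iteratedFDeriv_zero]
        ring

end Mollify

section ScaledBound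

variable {V : Type*} [NormedAddCommGroup V] [NormedSpace ℝ V]

/-- At `x`, the function `F` has size `A` and varies on the length scale `s`: up to the
factor `b n`, its `n`-th derivative at `x` is at most `A * s ^ (-n)`. -/
structure HasScaledBound (s A : ℝ) (b : ℕ → ℝ) (F : V → ℝ) (x : V) : Prop where
  contDiff : ContDiff ℝ ∞ F
  bound : ∀ n : ℕ, s ^ n * ‖iteratedFDeriv ℝ n F x‖ ≤ A * b n

/-- The bounds that the Leibniz rule gives for a product. -/
def leibnizSum (b c : ℕ → ℝ) (n : ℕ) : ℝ :=
  ∑ i ∈ Finset.range (n + 1), (n.choose i : ℝ) * b i * c (n - i)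

variable {s A B : ℝ} {b c : ℕ → ℝ} {F G : V → ℝ} {x : V}

theorem HasScaledBound.add (hs : 0 ≤ s) (hF : HasScaledBound s A b F x)
    (hG : HasScaledBound s A c G x) : HasScaledBound s A (b + c) (F + G) x where
  contDiff := hF.contDiff.add hG.contDiff
  bound n := by
    rw [iteratedFDeriv_add_apply (hF.contDiff.of_le (mod_cast le_top)).contDiffAt
      (hG.contDiff.of_le (mod_cast le_top)).contDiffAt]
    calc s ^ n * ‖iteratedFDeriv ℝ n F x + iteratedFDeriv ℝ n G x‖
        ≤ s ^ n * (‖iteratedFDeriv ℝ n F x‖ + ‖iteratedFDeriv ℝ n G x‖) := by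
          gcongr
          exact norm_add_le _ _
      _ ≤ A * b n + A * c n := by
          rw [mul_add]
          exact add_le_add (hF.bound n) (hG.bound n)
      _ = A * (b + c) n := (mul_add _ _ _).symm

theorem HasScaledBound.sub (hs : 0 ≤ s) (hF : HasScaledBound s A b F x)
    (hG : HasScaledBound s A c G x) : HasScaledBound s A (b + c) (F - G) x where
  contDiff := hF.contDiff.sub hG.contDiff
  bound n := by
    rw [iteratedFDeriv_sub_apply (hF.contDiff.of_le (mod_cast le_top)).contDiffAt
      (hG.contDiff.of_le (mod_cast le_top)).contDiffAt]
    calc s ^ n * ‖iteratedFDeriv ℝ n F x - iteratedFDeriv ℝ n G x‖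
        ≤ s ^ n * (‖iteratedFDeriv ℝ n F x‖ + ‖iteratedFDeriv ℝ n G x‖) := by
          gcongr
          exact norm_sub_le _ _
      _ ≤ A * b n + A * c n := by
          rw [mul_add]
          exact add_le_add (hF.bound n) (hG.bound n)
      _ = A * (b + c) n := (mul_add _ _ _).symm

theorem HasScaledBound.const_smul (hs : 0 ≤ s) (hF : HasScaledBound s A b F x) {a L : ℝ}
    (ha : |a| ≤ L) : HasScaledBound s (L * A) b (a • F) x where
  contDiff := contDiff_const.smul hF.contDiff
  bound n := by
    calc s ^ n * ‖iteratedFDeriv ℝ n (a • F) x‖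
        = |a| * (s ^ n * ‖iteratedFDeriv ℝ n F x‖) := by
          rw [iteratedFDeriv_const_smul_apply (hF.contDiff.of_le (mod_cast le_top)).contDiffAt,
            norm_smul, Real.norm_eq_abs]
          ring
      _ ≤ L * (A * b n) := mul_le_mul ha (hF.bound n) (by positivity) ((abs_nonneg a).trans ha)
      _ = L * A * b n := (mul_assoc _ _ _).symm

theorem HasScaledBound.mul (hs : 0 ≤ s) (hF : HasScaledBound s A b F x)
    (hG : HasScaledBound s B c G x) :
    HasScaledBound s (A * B) (leibnizSum b c) (F * G) x where
  contDiff := hF.contDiff.mul hG.contDiff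
  bound n := by
    calc s ^ n * ‖iteratedFDeriv ℝ n (F * G) x‖
        ≤ s ^ n * ∑ i ∈ Finset.range (n + 1), (n.choose i : ℝ) *
            ‖iteratedFDeriv ℝ i F x‖ * ‖iteratedFDeriv ℝ (n - i) G x‖ := by
          gcongr
          exact norm_iteratedFDeriv_mul_le hF.contDiff hG.contDiff x (mod_cast le_top)
      _ = ∑ i ∈ Finset.range (n + 1), (n.choose i : ℝ) * ((s ^ i * ‖iteratedFDeriv ℝ i F x‖) *
            (s ^ (n - i) * ‖iteratedFDeriv ℝ (n - i) G x‖)) := by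
          rw [Finset.mul_sum]
          refine Finset.sum_congr rfl fun i hi => ?_
          rw [← pow_mul_pow_sub s (Finset.mem_range_succ_iff.1 hi)]
          ring
      _ ≤ ∑ i ∈ Finset.range (n + 1), (n.choose i : ℝ) * ((A * b i) * (B * c (n - i))) := by
          refine Finset.sum_le_sum fun i _ => mul_le_mul_of_nonneg_left ?_ (Nat.cast_nonneg _)
          have hFi : 0 ≤ s ^ i * ‖iteratedFDeriv ℝ i F x‖ := by positivity
          exact mul_le_mul (hF.bound i) (hG.bound (n - i)) (by positivity) (hFi.trans (hF.bound i))
      _ = A * B * leibnizSum b c n := by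
          rw [leibnizSum, Finset.mul_sum]
          exact Finset.sum_congr rfl fun i _ => by ring

theorem HasScaledBound.smul_const {a : ℝ} (hF : HasScaledBound s (A * a) b F x) :
    HasScaledBound s A (a • b) F x where
  contDiff := hF.contDiff
  bound n := (hF.bound n).trans_eq (mul_assoc _ _ _)

theorem hasScaledBound_sub_apply (hs : 0 ≤ s) (hs₁ : s ≤ 1) (hF : ContDiff ℝ ∞ F)
    (hb : ∀ n, ‖iteratedFDeriv ℝ n F x‖ ≤ b n) :
    HasScaledBound s s b (fun z => F z - F x) x where
  contDiff := hF.sub contDiff_const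
  bound n := by
    have hbn : 0 ≤ b n := (norm_nonneg _).trans (hb n)
    rcases n with _ | n
    · simpa using mul_nonneg hs hbn
    · have hsub : iteratedFDeriv ℝ (n + 1) (fun z => F z - F x) x
          = iteratedFDeriv ℝ (n + 1) F x := by
        rw [fun_iteratedFDeriv_sub_apply (hF.of_le (mod_cast le_top)).contDiffAt
          contDiffAt_const, iteratedFDeriv_const_of_ne n.succ_ne_zero, Pi.zero_apply, sub_zero]
      rw [hsub]
      exact mul_le_mul (pow_le_of_le_one hs hs₁ n.succ_ne_zero) (hb _) (norm_nonneg _) hs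

theorem hasScaledBound_of_norm_le (hs : 0 ≤ s) (hs₁ : s ≤ 1) (hF : ContDiff ℝ ∞ F)
    (hb : ∀ n, ‖iteratedFDeriv ℝ n F x‖ ≤ A * b n) : HasScaledBound s A b F x where
  contDiff := hF
  bound n := (mul_le_of_le_one_left (norm_nonneg _) (pow_le_one₀ hs hs₁)).trans (hb n)

end ScaledBound

section Commutator

/-- Expanding a product of three factors around constants, the part of the commutator that is
linear in the fluctuations cancels. -/
theorem mul_apply_mul_apply_sub_apply_mul_mul {R A : Type*} [CommRing R] [CommRing A]
    [Algebra R A] (p : A →ₗ[R] R) (hp : p 1 = 1) (f g r : A) (α β γ ρ : R) :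
    ρ * (p f * p g) - p (f * g * r)
      = α * β * (ρ - p r)
        + α * ((ρ - γ) * p (g - algebraMap R A β)
            - p ((g - algebraMap R A β) * (r - algebraMap R A γ)))
        + β * ((ρ - γ) * p (f - algebraMap R A α)
            - p ((f - algebraMap R A α) * (r - algebraMap R A γ)))
        + (ρ * (p (f - algebraMap R A α) * p (g - algebraMap R A β))
            - p ((f - algebraMap R A α) * (g - algebraMap R A β) * r)) := by
  have hconst (a : R) : algebraMap R A a = a • 1 := Algebra.algebraMap_eq_smul_one a
  simp only [hconst, sub_mul, mul_sub, smul_mul_assoc, mul_smul_comm, one_mul, mul_one, map_sub,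
    map_smul, hp, smul_eq_mul]
  ring

variable {V : Type*} [NormedAddCommGroup V] [NormedSpace ℝ V] [MeasureSpace V]

/-- A Schwartz kernel of mass one with vanishing first moments. -/
structure IsMollifier (K : 𝓢(V, ℝ)) : Prop where
  integral_eq_one : ∫ y, K y = 1
  integral_smul_eq_zero : ∫ y, K y • y = 0

variable [FiniteDimensional ℝ V] [BorelSpace V] [(volume : Measure V).IsAddHaarMeasure]

/-- Mollification of width `s`, evaluated at `z`. -/
def mollifyAt (K : 𝓢(V, ℝ)) (s : ℝ) (z : V) : boundedSmooth V →ₗ[ℝ] ℝ where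
  toFun f := mollify K s f.1 z
  map_add' f g := by
    obtain ⟨A, hA⟩ := f.2.exists_norm_le
    obtain ⟨B, hB⟩ := g.2.exists_norm_le
    rw [mollify, mollify, mollify, ← integral_add
      (integrable_mollify_integrand K.integrable f.2.contDiff.continuous hA s z)
      (integrable_mollify_integrand K.integrable g.2.contDiff.continuous hB s z)]
    exact integral_congr_ae (ae_of_all _ fun y => smul_add _ _ _)
  map_smul' a f := by
    rw [mollify, mollify, RingHom.id_apply, ← integral_smul]
    exact integral_congr_ae (ae_of_all _ fun y => smul_comm (K y) a (f.1 (z - s • y)))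

theorem IsMollifier.mollifyAt_one {K : 𝓢(V, ℝ)} (hK : IsMollifier K) (s : ℝ) (z : V) :
    mollifyAt K s z 1 = 1 := by
  have hint : mollifyAt K s z 1 = ∫ y, K y := integral_congr_ae (ae_of_all _ fun y => mul_one _)
  rw [hint, hK.integral_eq_one]

theorem hasScaledBound_mollify (K : 𝓢(V, ℝ)) {f : V → ℝ} (hf : IsBoundedSmooth f) {s : ℝ}
    (hs : 0 ≤ s) {A : ℝ} (hA₀ : 0 ≤ A) {p : ℕ} {x : V} (hA : ∀ y, |f y| ≤ A * ‖y - x‖ ^ p) :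
    HasScaledBound s (A * s ^ p) (kernelMoment K p) (mollify K s f) x where
  contDiff := (hf.mollify K.integrable s).contDiff
  bound := norm_iteratedFDeriv_mollify_le K hf hs hA₀ hA

theorem IsMollifier.hasScaledBound_sub_mollify {K : 𝓢(V, ℝ)} (hK : IsMollifier K) {r : V → ℝ}
    (hr : IsBoundedSmooth r) {ρ : ℕ → ℝ} (hρ : ∀ n x, ‖iteratedFDeriv ℝ n r x‖ ≤ ρ n) {s : ℝ}
    (hs : 0 ≤ s) (hs₁ : s ≤ 1) (x : V) :
    HasScaledBound s (s ^ 2) (fun n => ρ (n + 2) * kernelMoment K 2 0) (r - mollify K s r) x := by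
  have hPr := hr.mollify K.integrable s
  refine hasScaledBound_of_norm_le hs hs₁ (hr.contDiff.sub hPr.contDiff) fun n => ?_
  have hlip : LipschitzWith (ρ (n + 2)).toNNReal (fderiv ℝ (iteratedFDeriv ℝ n r)) := by
    rw [fderiv_iteratedFDeriv]
    refine (LinearIsometryEquiv.lipschitz _).comp ?_ |>.weaken (one_mul _).le
    refine lipschitzWith_of_nnnorm_fderiv_le (hr.differentiable_iteratedFDeriv (n + 1)) fun y => ?_
    rw [← NNReal.coe_le_coe, coe_nnnorm, norm_fderiv_iteratedFDeriv]
    exact (hρ (n + 2) y).trans (Real.le_coe_toNNReal _)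
  rw [iteratedFDeriv_sub_apply (hr.contDiff.of_le (mod_cast le_top)).contDiffAt
      (hPr.contDiff.of_le (mod_cast le_top)).contDiffAt, iteratedFDeriv_mollify K.integrable hr]
  refine (norm_sub_mollify_le hK.integral_eq_one hK.integral_smul_eq_zero
    (hr.differentiable_iteratedFDeriv n) (hρ n) hlip s x).trans_eq ?_
  rw [Real.coe_toNNReal _ ((norm_nonneg _).trans (hρ (n + 2) x))]
  ring

/-- The constants of the commutator estimate, for a weight with derivatives bounded by `ρ`. -/
def commutatorConst (K : 𝓢(V, ℝ)) (ρ : ℕ → ℝ) : ℕ → ℝ :=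
  (fun n => ρ (n + 2) * kernelMoment K 2 0)
    + (leibnizSum ρ (kernelMoment K 1) + ρ 1 • kernelMoment K 2)
    + (leibnizSum ρ (kernelMoment K 1) + ρ 1 • kernelMoment K 2)
    + (leibnizSum ρ (leibnizSum (kernelMoment K 1) (kernelMoment K 1)) + ρ 0 • kernelMoment K 2)

variable {K : 𝓢(V, ℝ)} {r f g : boundedSmooth V} {ρ : ℕ → ℝ} {s L : ℝ} {x : V}

theorem hasScaledBound_linear_commutator (hs : 0 ≤ s) (hs₁ : s ≤ 1)
    (hρ : ∀ n x, ‖iteratedFDeriv ℝ n r.1 x‖ ≤ ρ n) (hL : 0 ≤ L)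
    (hg : ∀ y, |g.1 y| ≤ L * ‖y - x‖) :
    HasScaledBound s (L * s ^ 2) (leibnizSum ρ (kernelMoment K 1) + ρ 1 • kernelMoment K 2)
      (fun z => (r.1 z - r.1 x) * mollifyAt K s z g
        - mollifyAt K s z (g * (r - algebraMap ℝ _ (r.1 x)))) x := by
  have hρ₁ : 0 ≤ ρ 1 := (norm_nonneg _).trans (hρ 1 x)
  have hlip (y : V) : |r.1 y - r.1 x| ≤ ρ 1 * ‖y - x‖ :=
    convex_univ.norm_image_sub_le_of_norm_fderiv_le
      (fun z _ => r.2.contDiff.differentiable (by simp) z)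
      (fun z _ => by simpa only [norm_iteratedFDeriv_one] using hρ 1 z) (mem_univ x) (mem_univ y)
  have hr : HasScaledBound s s ρ (fun z => r.1 z - r.1 x) x :=
    hasScaledBound_sub_apply hs hs₁ r.2.contDiff fun n => hρ n x
  have hPg : HasScaledBound s (L * s ^ 1) (kernelMoment K 1) (mollify K s g.1) x :=
    hasScaledBound_mollify K g.2 hs hL (by simpa only [pow_one] using hg)
  have hPgr : HasScaledBound s (L * ρ 1 * s ^ 2) (kernelMoment K 2)
      (mollify K s (g * (r - algebraMap ℝ _ (r.1 x))).1) x := by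
    refine hasScaledBound_mollify K (g * (r - algebraMap ℝ _ (r.1 x))).2 hs (by positivity)
      fun y => ?_
    calc |g.1 y * (r.1 y - r.1 x)| ≤ L * ‖y - x‖ * (ρ 1 * ‖y - x‖) := by
          rw [abs_mul]
          exact mul_le_mul (hg y) (hlip y) (abs_nonneg _) (by positivity)
      _ = L * ρ 1 * ‖y - x‖ ^ 2 := by ring
  have hmul := hr.mul hs hPg
  rw [show s * (L * s ^ 1) = L * s ^ 2 by ring] at hmul
  rw [mul_right_comm] at hPgr
  exact hmul.sub hs hPgr.smul_const

theorem hasScaledBound_vanishing_commutator (hs : 0 ≤ s) (hs₁ : s ≤ 1)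
    (hρ : ∀ n x, ‖iteratedFDeriv ℝ n r.1 x‖ ≤ ρ n) (hL : 0 ≤ L)
    (hf : ∀ y, |f.1 y| ≤ L * ‖y - x‖) (hg : ∀ y, |g.1 y| ≤ L * ‖y - x‖) :
    HasScaledBound s ((L * s) ^ 2)
      (leibnizSum ρ (leibnizSum (kernelMoment K 1) (kernelMoment K 1)) + ρ 0 • kernelMoment K 2)
      (fun z => r.1 z * (mollifyAt K s z f * mollifyAt K s z g) - mollifyAt K s z (f * g * r))
      x := by
  have hρ₀ : 0 ≤ ρ 0 := (norm_nonneg _).trans (hρ 0 x)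
  have hr : HasScaledBound s 1 ρ r.1 x :=
    hasScaledBound_of_norm_le hs hs₁ r.2.contDiff fun n => (hρ n x).trans_eq (one_mul _).symm
  have hPf : HasScaledBound s (L * s ^ 1) (kernelMoment K 1) (mollify K s f.1) x :=
    hasScaledBound_mollify K f.2 hs hL (by simpa only [pow_one] using hf)
  have hPg : HasScaledBound s (L * s ^ 1) (kernelMoment K 1) (mollify K s g.1) x :=
    hasScaledBound_mollify K g.2 hs hL (by simpa only [pow_one] using hg)
  have hPfgr : HasScaledBound s (L ^ 2 * ρ 0 * s ^ 2) (kernelMoment K 2)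
      (mollify K s (f * g * r).1) x := by
    refine hasScaledBound_mollify K (f * g * r).2 hs (by positivity) fun y => ?_
    calc |f.1 y * g.1 y * r.1 y| ≤ (L * ‖y - x‖) * (L * ‖y - x‖) * ρ 0 := by
          rw [abs_mul, abs_mul]
          gcongr
          exacts [hf y, hg y, norm_iteratedFDeriv_zero.symm.trans_le (hρ 0 y)]
      _ = L ^ 2 * ρ 0 * ‖y - x‖ ^ 2 := by ring
  have hmul := hr.mul hs (hPf.mul hs hPg)
  rw [show 1 * (L * s ^ 1 * (L * s ^ 1)) = (L * s) ^ 2 by ring] at hmul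
  rw [show L ^ 2 * ρ 0 * s ^ 2 = (L * s) ^ 2 * ρ 0 by ring] at hPfgr
  exact hmul.sub hs hPfgr.smul_const

theorem IsMollifier.hasScaledBound_quadratic_commutator (hK : IsMollifier K) (hs : 0 ≤ s)
    (hs₁ : s ≤ 1) (hρ : ∀ n x, ‖iteratedFDeriv ℝ n r.1 x‖ ≤ ρ n)
    (hf : |f.1 x| ≤ L) (hg : |g.1 x| ≤ L) (hflip : ∀ y, |f.1 y - f.1 x| ≤ L * ‖y - x‖)
    (hglip : ∀ y, |g.1 y - g.1 x| ≤ L * ‖y - x‖) :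
    HasScaledBound s ((L * s) ^ 2) (commutatorConst K ρ)
      (fun z => r.1 z * (mollifyAt K s z f * mollifyAt K s z g) - mollifyAt K s z (f * g * r))
      x := by
  have hL : 0 ≤ L := (abs_nonneg _).trans hf
  have hsq : L * (L * s ^ 2) = (L * s) ^ 2 := by ring
  have hαβ : |f.1 x * g.1 x| ≤ L ^ 2 := by
    rw [abs_mul, pow_two]
    exact mul_le_mul hf hg (abs_nonneg _) hL
  have hconst := (hK.hasScaledBound_sub_mollify r.2 hρ hs hs₁ x).const_smul hs hαβ
  have hlin_g := (hasScaledBound_linear_commutator (K := K) (r := r)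
    (g := g - algebraMap ℝ _ (g.1 x)) hs hs₁ hρ hL hglip).const_smul hs hf
  have hlin_f := (hasScaledBound_linear_commutator (K := K) (r := r)
    (g := f - algebraMap ℝ _ (f.1 x)) hs hs₁ hρ hL hflip).const_smul hs hg
  have hquad := hasScaledBound_vanishing_commutator (K := K) (r := r)
    (f := f - algebraMap ℝ _ (f.1 x)) (g := g - algebraMap ℝ _ (g.1 x)) hs hs₁ hρ hL hflip hglip
  rw [← mul_pow] at hconst
  rw [hsq] at hlin_g hlin_f
  have hsum := ((hconst.add hs hlin_g).add hs hlin_f).add hs hquad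
  have hexpand := funext fun z => mul_apply_mul_apply_sub_apply_mul_mul (mollifyAt K s z)
    (hK.mollifyAt_one s z) f g r (f.1 x) (g.1 x) (r.1 x) (r.1 z)
  rw [hexpand]
  exact hsum

end Commutator

section Kernel

variable {ι : Type*} [Fintype ι]

/-- The plane wave of frequency `ξ`. -/
def planeWave (ξ x : ι → ℝ) : ℂ := Complex.exp (Complex.I * ((∑ i, ξ i * x i : ℝ) : ℂ))

theorem planeWave_neg (ξ x : ι → ℝ) :
    planeWave (-ξ) x = Complex.exp (-(Complex.I * ((∑ i, ξ i * x i : ℝ) : ℂ))) := by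
  simp [planeWave]

theorem planeWave_add_right (ξ x y : ι → ℝ) :
    planeWave ξ (x + y) = planeWave ξ x * planeWave ξ y := by
  simp [planeWave, ← Complex.exp_add, mul_add, Finset.sum_add_distrib]

theorem continuous_planeWave (ξ : ι → ℝ) : Continuous (planeWave ξ) := by
  unfold planeWave
  fun_prop

theorem integral_comp_two_pi_inv_smul_toLp (F : EuclideanSpace ℝ ι → ℂ) :
    ((2 * Real.pi) ^ Fintype.card ι)⁻¹ • ∫ y : ι → ℝ, F ((2 * Real.pi)⁻¹ • WithLp.toLp 2 y)
      = ∫ v, F v := by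
  have hpi : (0 : ℝ) < (2 * Real.pi) ^ Fintype.card ι := by positivity
  rw [(PiLp.volume_preserving_toLp ι).integral_comp
      (MeasurableEquiv.toLp 2 (ι → ℝ)).measurableEmbedding fun v => F ((2 * Real.pi)⁻¹ • v),
    Measure.integral_comp_inv_smul, finrank_euclideanSpace, abs_of_pos hpi,
    inv_smul_smul₀ hpi.ne']

theorem conj_fourierInv {E : Type*} [NormedAddCommGroup E] [InnerProductSpace ℝ E]
    [FiniteDimensional ℝ E] [MeasurableSpace E] [BorelSpace E] (f : E → ℝ) (w : E) :
    conj (𝓕⁻ (fun v => (f v : ℂ)) w) = 𝓕⁻ (fun v => (f v : ℂ)) (-w) := by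
  rw [Real.fourierInv_eq', Real.fourierInv_eq', ← integral_conj]
  refine integral_congr_ae (ae_of_all _ fun v => ?_)
  simp only [smul_eq_mul, map_mul, ← Complex.exp_conj, Complex.conj_ofReal, Complex.conj_I,
    inner_neg_right, mul_neg, Complex.ofReal_neg, neg_mul]

theorem exists_even_schwartz_fourier_eq {E : Type*} [NormedAddCommGroup E]
    [InnerProductSpace ℝ E] [FiniteDimensional ℝ E] [MeasurableSpace E] [BorelSpace E]
    (φ : 𝓢(E, ℝ)) (hφ : ∀ ξ, φ (-ξ) = φ ξ) :
    ∃ k : 𝓢(E, ℝ), (∀ v, k (-v) = k v) ∧ ∀ ξ, 𝓕 (fun v => (k v : ℂ)) ξ = φ ξ := by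
  let Φ : 𝓢(E, ℂ) := φ.postcompCLM Complex.ofRealCLM
  have heven (v : E) : 𝓕⁻ (Φ : E → ℂ) (-v) = 𝓕⁻ (Φ : E → ℂ) v := by
    have hΦ : (fun ξ => Φ (-ξ)) = Φ := funext fun ξ => congrArg Complex.ofReal (hφ ξ)
    rw [Real.fourierInv_eq_fourier_comp_neg, hΦ, ← Real.fourierInv_eq_fourier_neg,
      Real.fourierInv_eq_fourier_comp_neg, hΦ]
  have hreal (v : E) : (((𝓕⁻ Φ) v).re : ℂ) = (𝓕⁻ Φ) v := by
    rw [← Complex.conj_eq_iff_re, SchwartzMap.fourierInv_coe]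
    exact (conj_fourierInv φ v).trans (heven v)
  refine ⟨(𝓕⁻ Φ).postcompCLM Complex.reCLM, fun v => ?_, fun ξ => ?_⟩
  · simp only [SchwartzMap.postcompCLM_apply, SchwartzMap.fourierInv_coe, heven]
  · have hinv : 𝓕 (𝓕⁻ Φ : 𝓢(E, ℂ)) ξ = Φ ξ := by rw [FourierTransform.fourier_fourierInv_eq]
    simp only [SchwartzMap.postcompCLM_apply, Complex.reCLM_apply, hreal]
    exact hinv

theorem exists_even_schwartz_integral_smul_planeWave_eq {φ : (ι → ℝ) → ℝ}
    (hφ : ContDiff ℝ ∞ φ) (hφsupp : HasCompactSupport φ) (hφeven : ∀ ξ, φ (-ξ) = φ ξ) :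
    ∃ K : 𝓢(ι → ℝ, ℝ), (∀ y, K (-y) = K y) ∧
      ∀ ξ, ∫ y, K y • planeWave (-ξ) y = (φ ξ : ℂ) := by
  let e := EuclideanSpace.equiv ι ℝ
  let Φ : 𝓢(EuclideanSpace ℝ ι, ℝ) := (hφsupp.comp_homeomorph e.toHomeomorph).toSchwartzMap
    (hφ.comp e.contDiff)
  obtain ⟨k, hkeven, hk⟩ := exists_even_schwartz_fourier_eq Φ fun v => hφeven (e v)
  -- The library transform has phase `2π⟨v, ξ⟩`: rescaling space by `(2π)⁻¹` makes `ξ` angular.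
  let scale : (ι → ℝ) ≃L[ℝ] EuclideanSpace ℝ ι := e.symm.trans
    (ContinuousLinearEquiv.smulLeft (Units.mk0 (2 * Real.pi)⁻¹ (by positivity)))
  have hscale (ξ y : ι → ℝ) :
      2 * Real.pi * inner ℝ (scale y) (WithLp.toLp 2 ξ) = ∑ i, ξ i * y i := by
    change 2 * Real.pi * inner ℝ ((2 * Real.pi)⁻¹ • WithLp.toLp 2 y) (WithLp.toLp 2 ξ) = _
    rw [real_inner_smul_left, mul_inv_cancel_left₀ (by positivity), PiLp.inner_apply]
    rfl
  refine ⟨((2 * Real.pi) ^ Fintype.card ι)⁻¹ •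
    SchwartzMap.compCLMOfContinuousLinearEquiv ℝ scale k, fun y => ?_, fun ξ => ?_⟩
  · simp [hkeven]
  · have := hk (WithLp.toLp 2 ξ)
    rw [Real.fourier_eq', ← integral_comp_two_pi_inv_smul_toLp, ← integral_smul] at this
    refine (integral_congr_ae (ae_of_all _ fun y => ?_)).trans this
    have hwave : planeWave (-ξ) y = Complex.exp
        (((-2 * Real.pi * inner ℝ (scale y) (WithLp.toLp 2 ξ) : ℝ) : ℂ) * Complex.I) := by
      rw [planeWave_neg, ← hscale]
      congr 1
      push_cast
      ring
    simp only [hwave]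
    change (((2 * Real.pi) ^ Fintype.card ι)⁻¹ * k (scale y)) • _ = _
    rw [mul_smul, Complex.real_smul (x := k _), mul_comm (k _ : ℂ),
      ← smul_eq_mul (a := Complex.exp _)]
    rfl

theorem IsMollifier.of_even {V : Type*} [NormedAddCommGroup V] [NormedSpace ℝ V] [MeasureSpace V]
    [BorelSpace V] [(volume : Measure V).IsNegInvariant] {K : 𝓢(V, ℝ)}
    (hK : ∀ y, K (-y) = K y) (hmass : ∫ y, K y = 1) : IsMollifier K where
  integral_eq_one := hmass
  integral_smul_eq_zero := by
    have hodd : ∫ y, K y • y = -∫ y, K y • y := by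
      rw [← integral_neg]
      simpa only [hK, smul_neg] using (integral_neg_eq_self (fun y => K y • y) volume).symm
    have := IsAddTorsionFree.of_isTorsionFree ℝ V
    exact self_eq_neg.1 hodd

end Kernel

section Periodic

variable {ι F : Type*}

/-- Functions on `ℝ^ι` that are `2π`-periodic in every variable. -/
def IsTwoPiPeriodic (g : (ι → ℝ) → F) : Prop :=
  ∀ (x : ι → ℝ) (k : ι → ℤ), g (fun i => x i + 2 * Real.pi * k i) = g x

/-- The covering map from `ℝ^ι` to the torus, with period `2π` in every variable. -/
def torusMk : C(ι → ℝ, UnitAddTorus ι) where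
  toFun x i := ((2 * Real.pi)⁻¹ * x i : ℝ)
  continuous_toFun := by
    refine continuous_pi fun i => (AddCircle.continuous_mk' 1).comp (by fun_prop)

theorem isOpenQuotientMap_torusMk : IsOpenQuotientMap (torusMk (ι := ι)) :=
  IsOpenQuotientMap.piMap fun _ => QuotientAddGroup.isOpenQuotientMap_mk.comp
    (Homeomorph.mulLeft₀ _ (inv_ne_zero Real.two_pi_pos.ne')).isOpenQuotientMap

theorem IsTwoPiPeriodic.exists_comp_torusMk_eq [TopologicalSpace F] {g : (ι → ℝ) → F}
    (hper : IsTwoPiPeriodic g) (hg : Continuous g) :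
    ∃ G : C(UnitAddTorus ι, F), ∀ x, G (torusMk x) = g x := by
  have hfactors : Function.FactorsThrough g (torusMk (ι := ι)) := by
    intro x y hxy
    have hcoord (i : ι) : ∃ k : ℤ, x i = y i + 2 * Real.pi * k := by
      obtain ⟨k, hk⟩ := AddSubgroup.mem_zmultiples_iff.1
        (QuotientAddGroup.eq_iff_sub_mem.1 (congrFun hxy i))
      refine ⟨k, ?_⟩
      rw [zsmul_one, ← mul_sub, eq_inv_mul_iff_mul_eq₀ Real.two_pi_pos.ne'] at hk
      linarith
    choose k hk using hcoord
    rw [show x = fun i => y i + 2 * Real.pi * k i from funext hk, hper]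
  let G := isOpenQuotientMap_torusMk.isQuotientMap.lift ⟨g, hg⟩ hfactors
  exact ⟨G, fun x => DFunLike.congr_fun
    (isOpenQuotientMap_torusMk.isQuotientMap.lift_comp ⟨g, hg⟩ hfactors) x⟩

end Periodic

section FiniteSupport

variable {ι : Type*} [Finite ι]

theorem tendsto_intCast_cofinite_cocompact :
    Tendsto (fun (k : ι → ℤ) i => (k i : ℝ)) cofinite (cocompact (ι → ℝ)) := by
  rw [← coprodᵢ_cofinite, ← coprodᵢ_cocompact]
  exact Tendsto.pi_map_coprodᵢ fun _ : ι => Int.tendsto_coe_cofinite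

theorem finite_support_comp_smul_intCast {φ : (ι → ℝ) → ℝ} (hφ : HasCompactSupport φ) {s : ℝ}
    (hs : s ≠ 0) : (Function.support fun k : ι → ℤ => φ (s • fun i => (k i : ℝ))).Finite := by
  have htendsto : Tendsto (fun k : ι → ℤ => s • fun i => (k i : ℝ)) cofinite (cocompact _) :=
    (Homeomorph.smulOfNeZero s hs).isClosedEmbedding.tendsto_cocompact.comp
      tendsto_intCast_cofinite_cocompact
  have hzero : φ =ᶠ[cocompact _] 0 := by
    rwa [← coclosedCompact_eq_cocompact, ← hasCompactSupport_iff_eventuallyEq]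
  exact htendsto.eventually hzero

theorem tsum_fourierMultiplier_eq_sum {φ : (ι → ℝ) → ℝ} (hφ : HasCompactSupport φ) {s : ℝ}
    (hs : s ≠ 0) (c : (ι → ℤ) → ℂ) :
    ∑' k : ι → ℤ, (φ (s • fun i => (k i : ℝ)) : ℂ) * c k
      = ∑ k ∈ (finite_support_comp_smul_intCast hφ hs).toFinset,
          (φ (s • fun i => (k i : ℝ)) : ℂ) * c k := by
  refine tsum_eq_sum fun k hk => ?_
  rw [Set.Finite.mem_toFinset, Function.notMem_support] at hk
  rw [hk, Complex.ofReal_zero, zero_mul]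

end FiniteSupport

section FourierMultiplier

variable {ι : Type*} [Fintype ι]

theorem mFourier_torusMk (k : ι → ℤ) (x : ι → ℝ) :
    UnitAddTorus.mFourier k (torusMk x) = planeWave (fun i => (k i : ℝ)) x := by
  change ∏ i, fourier (k i) (((2 * Real.pi)⁻¹ * x i : ℝ) : UnitAddCircle) = _
  rw [planeWave, Complex.ofReal_sum, Finset.mul_sum, Complex.exp_sum]
  refine Finset.prod_congr rfl fun i _ => ?_
  rw [fourier_coe_apply]
  congr 1
  push_cast
  field_simp

theorem integral_Icc_exp_I_mul_int_mul (m : ℤ) :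
    ∫ s in Icc (-Real.pi) Real.pi, Complex.exp (Complex.I * ((m * s : ℝ) : ℂ))
      = if m = 0 then 2 * Real.pi else 0 := by
  have hpi : -Real.pi ≤ Real.pi := by linarith [Real.pi_pos]
  rw [integral_Icc_eq_integral_Ioc, ← intervalIntegral.integral_of_le hpi]
  split_ifs with hm
  · simp only [hm, Int.cast_zero, zero_mul, Complex.ofReal_zero, mul_zero, Complex.exp_zero,
      intervalIntegral.integral_const, Complex.real_smul, mul_one]
    push_cast
    ring
  · have hne : Complex.I * (m : ℂ) ≠ 0 := mul_ne_zero Complex.I_ne_zero (mod_cast hm)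
    have hexp : Complex.exp (Complex.I * m * (Real.pi : ℝ))
        = Complex.exp (Complex.I * m * (-Real.pi : ℝ)) :=
      Complex.exp_eq_exp_iff_exists_int.2 ⟨m, by push_cast; ring⟩
    push_cast
    simp only [← mul_assoc]
    rw [integral_exp_mul_complex hne, hexp, sub_self, zero_div]

theorem integral_Icc_planeWave (k : ι → ℤ) :
    ∫ x in Icc (fun _ : ι => -Real.pi) fun _ => Real.pi, planeWave (fun i => (k i : ℝ)) x
      = if k = 0 then (2 * Real.pi) ^ Fintype.card ι else 0 := by
  simp only [planeWave, Complex.ofReal_sum, Finset.mul_sum, Complex.exp_sum]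
  rw [← pi_univ_Icc, volume_pi, Measure.restrict_pi_pi, integral_fintype_prod_eq_prod (𝕜 := ℂ)
    fun i s => Complex.exp (Complex.I * ((k i * s : ℝ) : ℂ))]
  simp only [integral_Icc_exp_I_mul_int_mul]
  split_ifs with hk
  · simp [hk]
  · obtain ⟨i, hi⟩ := Function.ne_iff.1 hk
    exact Finset.prod_eq_zero (Finset.mem_univ i) (by simpa using hi)

/-- The `k`-th Fourier coefficient of a `2π`-periodic function. -/
def periodicFourierCoeff (g : (ι → ℝ) → ℂ) (k : ι → ℤ) : ℂ :=
  ((2 * Real.pi) ^ Fintype.card ι)⁻¹ •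
    ∫ x in Icc (fun _ => -Real.pi) fun _ => Real.pi, g x * planeWave (-fun i => (k i : ℝ)) x

theorem periodicFourierCoeff_planeWave (n k : ι → ℤ) :
    periodicFourierCoeff (planeWave fun i => (n i : ℝ)) k = if n = k then 1 else 0 := by
  have hmul (x : ι → ℝ) : planeWave (fun i => (n i : ℝ)) x * planeWave (-fun i => (k i : ℝ)) x
      = planeWave (fun i => ((n - k) i : ℝ)) x := by
    simp only [planeWave, ← Complex.exp_add, ← mul_add, ← Complex.ofReal_add,
      ← Finset.sum_add_distrib, ← add_mul, Pi.neg_apply, Pi.sub_apply, Int.cast_add,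
      Int.cast_neg, sub_eq_add_neg]
  simp only [periodicFourierCoeff, hmul, integral_Icc_planeWave, sub_eq_zero]
  split_ifs with hnk
  · rw [Complex.real_smul]
    push_cast
    exact inv_mul_cancel₀ (by simp [Real.pi_ne_zero])
  · exact smul_zero _

theorem integrable_mul_comp {X Y : Type*} [TopologicalSpace X] [MeasurableSpace X]
    [OpensMeasurableSpace X] [TopologicalSpace Y] [CompactSpace Y] {μ : Measure X} {w : X → ℂ}
    (hw : Integrable w μ) (p : C(X, Y)) (G : C(Y, ℂ)) : Integrable (fun x => w x * G (p x)) μ :=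
  hw.mul_bdd (G.comp p).continuous.aestronglyMeasurable
    (ae_of_all _ fun x => G.norm_coe_le_norm (p x))

/-- The functional `G ↦ ∫ w(x) G(p x) dμ(x)` on the continuous functions on a compact space. -/
def integralAgainst {X Y : Type*} [TopologicalSpace X] [MeasurableSpace X]
    [OpensMeasurableSpace X] [TopologicalSpace Y] [CompactSpace Y] {μ : Measure X} {w : X → ℂ}
    (hw : Integrable w μ) (p : C(X, Y)) : C(Y, ℂ) →L[ℂ] ℂ :=
  LinearMap.mkContinuous
    { toFun := fun G => ∫ x, w x * G (p x) ∂μ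
      map_add' := fun G H => by
        simp only [ContinuousMap.add_apply, mul_add]
        exact integral_add (integrable_mul_comp hw p G) (integrable_mul_comp hw p H)
      map_smul' := fun a G => by
        simp only [ContinuousMap.smul_apply, smul_eq_mul, mul_left_comm, integral_const_mul,
          RingHom.id_apply] }
    (∫ x, ‖w x‖ ∂μ) fun G => by
      rw [← integral_mul_const]
      refine norm_integral_le_of_norm_le (hw.norm.mul_const _) (ae_of_all _ fun x => ?_)
      rw [norm_mul]
      exact mul_le_mul_of_nonneg_left (G.norm_coe_le_norm (p x)) (norm_nonneg _)

theorem mollify_planeWave {φ : (ι → ℝ) → ℝ} {K : (ι → ℝ) → ℝ}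
    (hK : ∀ ξ, ∫ y, K y • planeWave (-ξ) y = (φ ξ : ℂ)) (s : ℝ) (ξ x : ι → ℝ) :
    mollify K s (planeWave ξ) x = φ (s • ξ) * planeWave ξ x := by
  have hsplit (y : ι → ℝ) : planeWave ξ (x - s • y) = planeWave (-(s • ξ)) y * planeWave ξ x := by
    rw [sub_eq_neg_add, planeWave_add_right]
    simp [planeWave, mul_assoc, mul_left_comm s]
  simp only [mollify, hsplit, ← smul_mul_assoc]
  rw [integral_mul_const, hK]

/-- It suffices to check this on characters, whose span is dense. -/
theorem tsum_fourierMultiplier_eq_mollify {φ : (ι → ℝ) → ℝ} (hφ : HasCompactSupport φ)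
    {K : (ι → ℝ) → ℝ} (hKint : Integrable K)
    (hK : ∀ ξ, ∫ y, K y • planeWave (-ξ) y = (φ ξ : ℂ)) {s : ℝ} (hs : s ≠ 0)
    {g : (ι → ℝ) → ℂ} (hg : Continuous g) (hper : IsTwoPiPeriodic g) (x : ι → ℝ) :
    ∑' k : ι → ℤ, (φ (s • fun i => (k i : ℝ)) : ℂ) *
        (periodicFourierCoeff g k * planeWave (fun i => (k i : ℝ)) x)
      = mollify K s g x := by
  classical
  obtain ⟨G, hG⟩ := hper.exists_comp_torusMk_eq hg
  obtain rfl : g = G ∘ torusMk := funext fun x => (hG x).symm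
  have hwave (k : ι → ℤ) : IntegrableOn (planeWave (-fun i => (k i : ℝ)))
      (Icc (fun _ : ι => -Real.pi) fun _ => Real.pi) :=
    (continuous_planeWave _).continuousOn.integrableOn_compact isCompact_Icc
  let translate : C(ι → ℝ, UnitAddTorus ι) := torusMk.comp ⟨fun y => x - s • y, by fun_prop⟩
  let A : C(UnitAddTorus ι, ℂ) →L[ℂ] ℂ :=
    ∑ k ∈ (finite_support_comp_smul_intCast hφ hs).toFinset,
      ((φ (s • fun i => (k i : ℝ)) : ℂ) * (planeWave (fun i => (k i : ℝ)) x *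
        (((2 * Real.pi) ^ Fintype.card ι)⁻¹ : ℝ))) • integralAgainst (hwave k) torusMk
  let B : C(UnitAddTorus ι, ℂ) →L[ℂ] ℂ := integralAgainst hKint.ofReal translate
  have hA (H : C(UnitAddTorus ι, ℂ)) :
      A H = ∑' k : ι → ℤ, (φ (s • fun i => (k i : ℝ)) : ℂ) *
        (periodicFourierCoeff (H ∘ torusMk) k * planeWave (fun i => (k i : ℝ)) x) := by
    rw [tsum_fourierMultiplier_eq_sum hφ hs, sum_apply]
    refine Finset.sum_congr rfl fun k _ => ?_
    have happly : integralAgainst (hwave k) torusMk H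
        = ∫ x in Icc (fun _ => -Real.pi) fun _ => Real.pi,
          (H ∘ torusMk) x * planeWave (-fun i => (k i : ℝ)) x :=
      integral_congr_ae (ae_of_all _ fun x => mul_comm _ _)
    rw [smul_apply, smul_eq_mul, happly, periodicFourierCoeff, Complex.real_smul]
    ring
  have hB (H : C(UnitAddTorus ι, ℂ)) : B H = mollify K s (H ∘ torusMk) x := rfl
  have hAB : A = B := by
    refine ContinuousLinearMap.ext_on (s := range UnitAddTorus.mFourier) ?_ ?_
    · exact Submodule.dense_iff_topologicalClosure_eq_top.2
        UnitAddTorus.span_mFourier_closure_eq_top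
    · rintro _ ⟨n, rfl⟩
      have hn : UnitAddTorus.mFourier n ∘ torusMk = planeWave fun i => (n i : ℝ) :=
        funext (mFourier_torusMk n)
      rw [hA, hB, hn, mollify_planeWave hK, tsum_eq_single n]
      · simp [periodicFourierCoeff_planeWave]
      · intro k hk
        simp [periodicFourierCoeff_planeWave, hk.symm]
  rw [← hA, hAB, hB]

end FourierMultiplier

section PeriodicSmooth

variable {ι F : Type*}

theorem exists_add_two_pi_mul_mem_Icc (x : ι → ℝ) :
    ∃ k : ι → ℤ, (fun i => x i + 2 * Real.pi * k i) ∈ Icc 0 fun _ : ι => 2 * Real.pi := by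
  have hshift (i : ι) : x i + 2 * Real.pi * ((-⌊x i / (2 * Real.pi)⌋ : ℤ) : ℝ)
      = 2 * Real.pi * Int.fract (x i / (2 * Real.pi)) := by
    have hpi := Real.pi_ne_zero
    rw [Int.fract]
    push_cast
    field_simp
    ring
  refine ⟨fun i => -⌊x i / (2 * Real.pi)⌋, fun i => ?_, fun i => ?_⟩
  · exact (mul_nonneg Real.two_pi_pos.le (Int.fract_nonneg _)).trans_eq (hshift i).symm
  · exact (hshift i).trans_le (mul_le_of_le_one_right Real.two_pi_pos.le (Int.fract_lt_one _).le)

variable [NormedAddCommGroup F] [NormedSpace ℝ F] [Fintype ι]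

theorem IsTwoPiPeriodic.iteratedFDeriv {f : (ι → ℝ) → F} (hf : IsTwoPiPeriodic f) (n : ℕ) :
    IsTwoPiPeriodic (iteratedFDeriv ℝ n f) := by
  intro x k
  have htranslate : (fun z => f (z + fun i => 2 * Real.pi * k i)) = f := funext fun z => hf z k
  change _root_.iteratedFDeriv ℝ n f (x + fun i => 2 * Real.pi * k i) = _
  rw [← iteratedFDeriv_comp_add_right, htranslate]

theorem IsTwoPiPeriodic.isBoundedSmooth {f : (ι → ℝ) → F} (hper : IsTwoPiPeriodic f)
    (hf : ContDiff ℝ ∞ f) : IsBoundedSmooth f where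
  contDiff := hf
  exists_bound n := by
    obtain ⟨C, hC⟩ := (isCompact_Icc (a := (0 : ι → ℝ))).exists_bound_of_continuousOn
      (hf.continuous_iteratedFDeriv (m := n) (mod_cast le_top)).continuousOn
    refine ⟨C, fun x => ?_⟩
    obtain ⟨k, hk⟩ := exists_add_two_pi_mul_mem_Icc x
    rw [← hper.iteratedFDeriv n x k]
    exact hC _ hk

theorem norm_iteratedFDeriv_slice_le {E V : Type*} [NormedAddCommGroup E] [NormedSpace ℝ E]
    [NormedAddCommGroup V] [NormedSpace ℝ V] {r : E × V → F} {n : ℕ} (hr : ContDiff ℝ n r)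
    (t : E) (x : V) :
    ‖iteratedFDeriv ℝ n (fun y => r (t, y)) x‖ ≤ ‖iteratedFDeriv ℝ n r (t, x)‖ := by
  have hslice : (fun y => r (t, y))
      = (fun z => r ((t, 0) + z)) ∘ ContinuousLinearMap.inr ℝ E V := by
    funext y
    simp
  have hr' : ContDiff ℝ n fun z => r ((t, 0) + z) := hr.comp (contDiff_const.add contDiff_id)
  rw [hslice, ContinuousLinearMap.iteratedFDeriv_comp_right _ hr' _ le_rfl,
    iteratedFDeriv_comp_add_left]
  refine (ContinuousMultilinearMap.norm_compContinuousLinearMap_le _ _).trans ?_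
  refine (mul_le_of_le_one_right (norm_nonneg _) (Finset.prod_le_one (fun _ _ => norm_nonneg _)
    fun _ _ => ContinuousLinearMap.norm_inr_le_one ℝ E V)).trans_eq ?_
  simp

theorem exists_norm_iteratedFDeriv_slice_le {E : Type*} [NormedAddCommGroup E] [NormedSpace ℝ E]
    {I : Set E} (hI : IsCompact I) {r : E × (ι → ℝ) → F} {n : ℕ} (hr : ContDiff ℝ n r)
    (hper : ∀ t, IsTwoPiPeriodic fun x => r (t, x)) :
    ∃ C : ℝ, ∀ t ∈ I, ∀ x, ‖iteratedFDeriv ℝ n (fun y => r (t, y)) x‖ ≤ C := by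
  obtain ⟨C, hC⟩ := (hI.prod (isCompact_Icc (a := (0 : ι → ℝ)))).exists_bound_of_continuousOn
    (hr.continuous_iteratedFDeriv le_rfl).continuousOn
  refine ⟨C, fun t ht x => ?_⟩
  obtain ⟨k, hk⟩ := exists_add_two_pi_mul_mem_Icc x
  rw [← (hper t).iteratedFDeriv n x k]
  exact (norm_iteratedFDeriv_slice_le hr t _).trans (hC _ ⟨ht, hk⟩)

end PeriodicSmooth

section RealMultiplier

variable {ι : Type*} [Fintype ι]

theorem isMollifier_of_integral_smul_planeWave_eq {φ : (ι → ℝ) → ℝ} (hφ₀ : φ 0 = 1)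
    {K : 𝓢(ι → ℝ, ℝ)} (hKeven : ∀ y, K (-y) = K y)
    (hK : ∀ ξ, ∫ y, K y • planeWave (-ξ) y = (φ ξ : ℂ)) : IsMollifier K := by
  refine .of_even hKeven (Complex.ofReal_injective ?_)
  rw [← integral_complex_ofReal, ← hφ₀, ← hK]
  simp [planeWave]

theorem Pse_eq_mollify {φ : V3 → ℝ} (hφ : HasCompactSupport φ) {K : V3 → ℝ}
    (hKint : Integrable K) (hK : ∀ ξ, ∫ y, K y • planeWave (-ξ) y = (φ ξ : ℂ)) (S : ℝ)
    {g : V3 → ℝ} (hg : Continuous g) (hper : IsTwoPiPeriodic g) :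
    Pse φ S g = mollify K ((2 : ℝ) ^ Jof S)⁻¹ g := by
  funext x
  have hs : ((2 : ℝ) ^ Jof S)⁻¹ ≠ 0 := inv_ne_zero (zpow_ne_zero _ two_ne_zero)
  have htsum := tsum_fourierMultiplier_eq_mollify hφ hKint hK hs
    (Complex.continuous_ofReal.comp hg) (fun x k => congrArg Complex.ofReal (hper x k)) x
  have hfcoef (k : Fin 3 → ℤ) : fcoef g k = periodicFourierCoeff (Complex.ofReal ∘ g) k := by
    simp only [periodicFourierCoeff, planeWave_neg]
    rfl
  rw [Pse, ← Complex.ofReal_re (mollify K _ g x), ← mollify_ofReal]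
  refine congrArg Complex.re (Eq.trans ?_ htsum)
  refine tsum_congr fun k => ?_
  rw [hfcoef, mul_assoc]
  congr 4
  funext i
  exact div_eq_inv_mul _ _

end RealMultiplier

section Divergence

variable {ι κ V : Type*} [Fintype ι] [Fintype κ] [NormedAddCommGroup V] [NormedSpace ℝ V]

theorem norm_iteratedFDeriv_pi_le {F : V → κ → ℝ} {n : ℕ} (hF : ContDiff ℝ n F) {x : V} {B : ℝ}
    (hB₀ : 0 ≤ B) (hB : ∀ i, ‖iteratedFDeriv ℝ n (fun y => F y i) x‖ ≤ B) :
    ‖iteratedFDeriv ℝ n F x‖ ≤ B := by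
  refine ContinuousMultilinearMap.opNorm_le_bound hB₀ fun v => ?_
  refine (pi_norm_le_iff_of_nonneg (by positivity)).2 fun i => ?_
  have hcoord : iteratedFDeriv ℝ n F x v i = iteratedFDeriv ℝ n (fun y => F y i) x v :=
    (DFunLike.congr_fun ((ContinuousLinearMap.proj (R := ℝ) (φ := fun _ : κ => ℝ) i)
      |>.iteratedFDeriv_comp_left hF.contDiffAt le_rfl) v).symm
  rw [hcoord]
  exact ContinuousMultilinearMap.le_of_opNorm_le (hB i) v

theorem norm_iteratedFDeriv_divergence_le [DecidableEq ι] {G : κ → ι → (ι → ℝ) → ℝ}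
    {x : ι → ℝ} {B : ℝ} {n : ℕ} (hG : ∀ i j, ContDiff ℝ (n + 1) (G i j)) (hB₀ : 0 ≤ B)
    (hB : ∀ i j, ‖iteratedFDeriv ℝ (n + 1) (G i j) x‖ ≤ B) :
    ‖iteratedFDeriv ℝ n (fun y i => ∑ j, fderiv ℝ (G i j) y (Pi.single j 1)) x‖
      ≤ Fintype.card ι * B := by
  have hfderiv (i : κ) (j : ι) : ContDiff ℝ n (fderiv ℝ (G i j)) := (hG i j).fderiv_right le_rfl
  have hpartial (i : κ) (j : ι) : ContDiff ℝ n fun y => fderiv ℝ (G i j) y (Pi.single j 1) :=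
    (hfderiv i j).clm_apply contDiff_const
  refine norm_iteratedFDeriv_pi_le (contDiff_pi.2 fun i => .sum fun j _ => hpartial i j)
    (by positivity) fun i => ?_
  have hterm (j : ι) :
      ‖iteratedFDeriv ℝ n (fun y => fderiv ℝ (G i j) y (Pi.single j 1)) x‖ ≤ B := by
    refine (norm_iteratedFDeriv_clm_apply_const (hfderiv i j).contDiffAt le_rfl).trans ?_
    rw [Pi.norm_single, norm_one, one_mul, norm_iteratedFDeriv_fderiv]
    exact hB i j
  rw [iteratedFDeriv_fun_sum_apply fun j _ => (hpartial i j).contDiffAt]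
  refine (norm_sum_le_of_le _ fun j _ => hterm j).trans_eq ?_
  rw [Finset.sum_const, Finset.card_univ, nsmul_eq_mul]

end Divergence

section DivergenceCommutator

variable {ι : Type*} [Fintype ι] [DecidableEq ι]

theorem IsMollifier.norm_iteratedFDeriv_divergence_commutator_le {K : 𝓢(ι → ℝ, ℝ)}
    (hK : IsMollifier K) {r : (ι → ℝ) → ℝ} (hr : IsBoundedSmooth r) {ρ : ℕ → ℝ}
    (hρ : ∀ n x, ‖iteratedFDeriv ℝ n r x‖ ≤ ρ n) {v : (ι → ℝ) → ι → ℝ}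
    (hv : ∀ i, IsBoundedSmooth fun y => v y i) {L : ℝ}
    (hL : ∀ x, ∀ n ≤ 1, ‖iteratedFDeriv ℝ n v x‖ ≤ L) {s : ℝ} (hs : 0 < s) (hs₁ : s ≤ 1)
    (n : ℕ) (x : ι → ℝ) :
    ‖iteratedFDeriv ℝ n (fun y i => ∑ j, fderiv ℝ (fun z =>
        r z * (mollify K s (fun y => v y i) z * mollify K s (fun y => v y j) z)
          - mollify K s (fun y => v y i * v y j * r y) z) y (Pi.single j 1)) x‖
      ≤ Fintype.card ι * ((L * s) ^ 2 * |commutatorConst K ρ (n + 1)| / s ^ (n + 1)) := by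
  have hnorm (y : ι → ℝ) : ‖v y‖ ≤ L := norm_iteratedFDeriv_zero.symm.trans_le (hL y 0 zero_le_one)
  have hlip (y : ι → ℝ) : ‖v y - v x‖ ≤ L * ‖y - x‖ :=
    convex_univ.norm_image_sub_le_of_norm_fderiv_le
      (fun z _ => (contDiff_pi.2 fun i => (hv i).contDiff).differentiable (by simp) z)
      (fun z _ => by simpa only [norm_iteratedFDeriv_one] using hL z 1 le_rfl)
      (mem_univ x) (mem_univ y)
  have hG (i j : ι) : HasScaledBound s ((L * s) ^ 2) (commutatorConst K ρ) (fun z =>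
      r z * (mollify K s (fun y => v y i) z * mollify K s (fun y => v y j) z)
        - mollify K s (fun y => v y i * v y j * r y) z) x :=
    hK.hasScaledBound_quadratic_commutator (r := ⟨r, hr⟩) (f := ⟨_, hv i⟩) (g := ⟨_, hv j⟩)
      hs.le hs₁ hρ ((norm_le_pi_norm (v x) i).trans (hnorm x))
      ((norm_le_pi_norm (v x) j).trans (hnorm x))
      (fun y => (norm_le_pi_norm (v y - v x) i).trans (hlip y))
      fun y => (norm_le_pi_norm (v y - v x) j).trans (hlip y)
  refine norm_iteratedFDeriv_divergence_le
    (fun i j => (hG i j).contDiff.of_le (mod_cast le_top)) (by positivity) fun i j => ?_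
  rw [le_div_iff₀' (by positivity)]
  exact ((hG i j).bound (n + 1)).trans
    (mul_le_mul_of_nonneg_left (le_abs_self _) (sq_nonneg _))

end DivergenceCommutator

section Scale

theorem one_le_two_zpow_Jof {S : ℝ} (hS : 1 ≤ S) : 1 ≤ (2 : ℝ) ^ Jof S :=
  one_le_zpow₀ one_le_two (Int.floor_nonneg.2 (Real.logb_nonneg one_lt_two hS))

theorem two_zpow_Jof_le {S : ℝ} (hS : 0 < S) : (2 : ℝ) ^ Jof S ≤ S := by
  rw [← Real.rpow_intCast]
  exact (Real.rpow_le_rpow_of_exponent_le one_le_two (Int.floor_le _)).trans_eq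
    (Real.rpow_logb two_pos (by norm_num) hS)

theorem le_two_mul_two_zpow_Jof {S : ℝ} (hS : 0 < S) : S ≤ 2 * (2 : ℝ) ^ Jof S := by
  rw [mul_comm, ← zpow_add_one₀ two_ne_zero, ← Real.rpow_intCast]
  refine (Real.rpow_logb two_pos (by norm_num) hS).symm.trans_le
    (Real.rpow_le_rpow_of_exponent_le one_le_two ?_)
  push_cast
  exact (Int.lt_floor_add_one _).le

theorem dyadicScale_bounds {ℓ : ℝ} (hℓ₀ : 0 < ℓ) (hℓ₁ : ℓ ≤ 1) :
    ℓ ≤ ((2 : ℝ) ^ Jof ℓ⁻¹)⁻¹ ∧ ((2 : ℝ) ^ Jof ℓ⁻¹)⁻¹ ≤ 2 * ℓ ∧ ((2 : ℝ) ^ Jof ℓ⁻¹)⁻¹ ≤ 1 := by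
  have hpos : (0 : ℝ) < 2 ^ Jof ℓ⁻¹ := zpow_pos two_pos _
  refine ⟨?_, ?_, inv_le_one_of_one_le₀ (one_le_two_zpow_Jof ((one_le_inv₀ hℓ₀).2 hℓ₁))⟩
  · exact (le_inv_comm₀ hpos hℓ₀).1 (two_zpow_Jof_le (inv_pos.2 hℓ₀))
  · rw [inv_le_iff_one_le_mul₀ hpos, mul_right_comm]
    exact (inv_le_iff_one_le_mul₀ hℓ₀).1 (le_two_mul_two_zpow_Jof (inv_pos.2 hℓ₀))

theorem sq_div_pow_succ_le_two_mul_rpow {s ℓ : ℝ} (hℓ₀ : 0 < ℓ) (hℓ₁ : ℓ ≤ 1) (hℓs : ℓ ≤ s)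
    (hsℓ : s ≤ 2 * ℓ) {n N : ℕ} (hn : n ≤ N) :
    s ^ 2 / s ^ (n + 1) ≤ 2 * ℓ ^ ((1 : ℝ) - N) := by
  have hs : 0 < s := hℓ₀.trans_le hℓs
  calc s ^ 2 / s ^ (n + 1) = s / s ^ n := by
        rw [pow_two, pow_succ, mul_div_mul_right _ _ hs.ne']
    _ ≤ 2 * ℓ / ℓ ^ n := by gcongr
    _ ≤ 2 * ℓ / ℓ ^ N := div_le_div_of_nonneg_left (by positivity) (by positivity)
        (pow_le_pow_of_le_one hℓ₀.le hℓ₁ hn)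
    _ = 2 * ℓ ^ ((1 : ℝ) - N) := by
        rw [Real.rpow_sub hℓ₀, Real.rpow_one, Real.rpow_natCast, mul_div_assoc]

end Scale

section Main

theorem norm_le_enorm3 (x : V3) : ‖x‖ ≤ enorm3 x := by
  refine (pi_norm_le_iff_of_nonneg (Real.sqrt_nonneg _)).2 fun i => Real.abs_le_sqrt ?_
  exact Finset.single_le_sum (f := fun i => x i ^ 2) (fun i _ => sq_nonneg (x i))
    (Finset.mem_univ i)

theorem IsCutoff.hasCompactSupport {φ : V3 → ℝ} (hφ : IsCutoff φ) : HasCompactSupport φ :=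
  .of_support_subset_isCompact (isCompact_closedBall 0 2) fun x hx => by
    by_contra hnorm
    refine hx (hφ.2.2.2 x ((le_of_lt ?_).trans (norm_le_enorm3 x)))
    simpa using hnorm

theorem IsCutoff.even {φ : V3 → ℝ} (hφ : IsCutoff φ) (ξ : V3) : φ (-ξ) = φ ξ :=
  hφ.2.1 _ _ (by simp [enorm3])

theorem IsCutoff.apply_zero {φ : V3 → ℝ} (hφ : IsCutoff φ) : φ 0 = 1 :=
  hφ.2.2.1 0 (by simp [enorm3])

theorem Qcomm_eq_divergence_mollify {φ : V3 → ℝ} (hφ : HasCompactSupport φ) {K : V3 → ℝ}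
    (hKint : Integrable K) (hK : ∀ ξ, ∫ y, K y • planeWave (-ξ) y = (φ ξ : ℂ)) (ℓ t : ℝ)
    {ϱ : ℝ × V3 → ℝ} (hϱ : Continuous fun y => (ϱ (t, y))⁻¹) (hϱper : PerSpaceT ϱ)
    {m : ℝ × V3 → V3} (hm : Continuous fun y => m (t, y)) (hmper : PerSpaceT m) :
    (fun y => Qcomm φ ℓ ϱ m (t, y)) = fun y i => ∑ j, fderiv ℝ (fun z => (ϱ (t, z))⁻¹ *
      (mollify K ((2 : ℝ) ^ Jof ℓ⁻¹)⁻¹ (fun y => m (t, y) i) z *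
        mollify K ((2 : ℝ) ^ Jof ℓ⁻¹)⁻¹ (fun y => m (t, y) j) z)
      - mollify K ((2 : ℝ) ^ Jof ℓ⁻¹)⁻¹ (fun y => m (t, y) i * m (t, y) j * (ϱ (t, y))⁻¹) z)
        y (Pi.single j 1) := by
  have hcoord (i : Fin 3) : Continuous fun y => m (t, y) i := (continuous_apply i).comp hm
  have hcoordper (i : Fin 3) : IsTwoPiPeriodic fun y => m (t, y) i :=
    fun x k => congrFun (hmper t x k) i
  have hfluxper (i j : Fin 3) :
      IsTwoPiPeriodic fun y => m (t, y) i * m (t, y) j * (ϱ (t, y))⁻¹ :=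
    fun x k => by simp only [hmper t x k, hϱper t x k]
  have hPm (i : Fin 3) := Pse_eq_mollify hφ hKint hK ℓ⁻¹ (hcoord i) (hcoordper i)
  have hPflux (i j : Fin 3) : Pse φ ℓ⁻¹ (fun y => m (t, y) i * m (t, y) j * (ϱ (t, y))⁻¹) = _ :=
    Pse_eq_mollify hφ hKint hK ℓ⁻¹
    (((hcoord i).mul (hcoord j)).mul hϱ) (hfluxper i j)
  funext y i
  refine Finset.sum_congr rfl fun j _ => ?_
  rw [← hPm i, ← hPm j, ← hPflux i j]
  simp only [← div_eq_mul_inv, inv_mul_eq_div]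
  rfl

theorem statement10_general {φ : V3 → ℝ} (hφ : ContDiff ℝ ∞ φ) (hφsupp : HasCompactSupport φ)
    (hφeven : ∀ ξ, φ (-ξ) = φ ξ) (hφ₀ : φ 0 = 1) (Nbar : ℕ) {I : Set ℝ} (hI : IsCompact I)
    {ϱ : ℝ × V3 → ℝ} (hϱ : ContDiff ℝ ∞ ϱ) (hϱper : PerSpaceT ϱ) (hϱ₀ : ∀ tx, ϱ tx ≠ 0) :
    ∃ C : ℝ, 0 < C ∧ ∀ L ℓ : ℝ, 0 < ℓ → ℓ < 1 →
      ∀ m : ℝ × V3 → V3, (∀ t ∈ I, ContDiff ℝ ∞ fun y => m (t, y)) → PerSpaceT m →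
        (∀ t ∈ I, ∀ x, ∀ n ≤ 1, ‖iteratedFDeriv ℝ n (fun y => m (t, y)) x‖ ≤ L) →
      ∀ N ≤ Nbar, ∀ n ≤ N, ∀ t ∈ I, ∀ x,
        ‖iteratedFDeriv ℝ n (fun y => Qcomm φ ℓ ϱ m (t, y)) x‖
          ≤ C * ℓ ^ ((1 : ℝ) - N) * L ^ 2 := by
  obtain ⟨K, hKeven, hK⟩ :=
    exists_even_schwartz_integral_smul_planeWave_eq hφ hφsupp hφeven
  have hKmoll : IsMollifier K := isMollifier_of_integral_smul_planeWave_eq hφ₀ hKeven hK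
  have hr : ContDiff ℝ ∞ fun tx => (ϱ tx)⁻¹ := hϱ.inv hϱ₀
  have hrper (t : ℝ) : IsTwoPiPeriodic fun y => (ϱ (t, y))⁻¹ :=
    fun x k => congrArg _ (hϱper t x k)
  choose ρ hρ using fun n : ℕ =>
    exists_norm_iteratedFDeriv_slice_le hI (hr.of_le (mod_cast le_top : (n : ℕ∞ω) ≤ ∞)) hrper
  refine ⟨1 + ∑ n ∈ Finset.range (Nbar + 1), 6 * |commutatorConst K ρ (n + 1)|, by positivity, ?_⟩
  intro L ℓ hℓ₀ hℓ₁ m hm hmper hL N hN n hn t ht x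
  have hr_slice : ContDiff ℝ ∞ fun y => (ϱ (t, y))⁻¹ := hr.comp (contDiff_prodMk_right t)
  obtain ⟨hℓs, hsℓ, hs₁⟩ := dyadicScale_bounds hℓ₀ hℓ₁.le
  rw [Qcomm_eq_divergence_mollify hφsupp K.integrable hK ℓ t hr_slice.continuous hϱper
    (hm t ht).continuous hmper]
  refine (hKmoll.norm_iteratedFDeriv_divergence_commutator_le ((hrper t).isBoundedSmooth hr_slice)
    (fun n => hρ n t ht) (fun i => IsTwoPiPeriodic.isBoundedSmooth
      (fun x k => congrFun (hmper t x k) i) (contDiff_pi.1 (hm t ht) i))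
    (hL t ht) (hℓ₀.trans_le hℓs) hs₁ n x).trans ?_
  have hscale := sq_div_pow_succ_le_two_mul_rpow hℓ₀ hℓ₁.le hℓs hsℓ hn
  set s := ((2 : ℝ) ^ Jof ℓ⁻¹)⁻¹
  have hconst : 6 * |commutatorConst K ρ (n + 1)|
      ≤ 1 + ∑ n ∈ Finset.range (Nbar + 1), 6 * |commutatorConst K ρ (n + 1)| :=
    (Finset.single_le_sum (f := fun n => 6 * |commutatorConst K ρ (n + 1)|)
      (fun _ _ => by positivity) (Finset.mem_range_succ_iff.2 (hn.trans hN))).trans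
      (le_add_of_nonneg_left zero_le_one)
  calc (Fintype.card (Fin 3) : ℝ) * ((L * s) ^ 2 * |commutatorConst K ρ (n + 1)| / s ^ (n + 1))
      = 3 * |commutatorConst K ρ (n + 1)| * L ^ 2 * (s ^ 2 / s ^ (n + 1)) := by
        rw [Fintype.card_fin]
        ring
    _ ≤ 3 * |commutatorConst K ρ (n + 1)| * L ^ 2 * (2 * ℓ ^ ((1 : ℝ) - N)) := by gcongr
    _ = 6 * |commutatorConst K ρ (n + 1)| * ℓ ^ ((1 : ℝ) - N) * L ^ 2 := by ring
    _ ≤ _ := by gcongr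

/-- **Quadratic commutator estimate.**  For `m` with `‖m‖₀ ≤ M`, `‖m‖₁ ≤ M λ δ^{1/2}`
and a smooth density `ϱ ≥ ε₀`, the quadratic form
`Q(m,m) = div(m_ℓ ⊗ m_ℓ/ϱ - P_{≤ℓ⁻¹}(m⊗m/ϱ))` satisfies
`‖Q(m,m)‖_N ≤ C ℓ^{1-N} (λ δ^{1/2})²` for `0 ≤ N ≤ N̄`, with `C = C(N̄, M, ε₀, ϱ, φ)`. -/
theorem statement10 (φ : V3 → ℝ) (hφ : IsCutoff φ) (Nbar : ℕ)
    (M T ε₀ : ℝ) (hM : 1 ≤ M) (hT : 0 < T) (hε₀ : 0 < ε₀)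
    (ϱ : ℝ × V3 → ℝ) (hϱ : ContDiff ℝ (⊤ : ℕ∞) ϱ) (hϱper : PerSpaceT ϱ)
    (hϱlow : ∀ tx : ℝ × V3, ε₀ ≤ ϱ tx) :
    ∃ C : ℝ, 0 < C ∧
      ∀ lam δ ℓ : ℝ, 1 ≤ lam → 0 < δ → δ ≤ 1 → 1 ≤ lam * δ ^ ((1 : ℝ) / 2) →
        0 < ℓ → ℓ < 1 →
      ∀ m : ℝ × V3 → V3, ContDiff ℝ (⊤ : ℕ∞) m → PerSpaceT m →
        (∀ t ∈ Set.Icc (0 : ℝ) T, ∀ x : V3, ‖m (t, x)‖ ≤ M) →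
        (∀ t ∈ Set.Icc (0 : ℝ) T, ∀ x : V3, ∀ n : ℕ, n ≤ 1 →
          ‖iteratedFDeriv ℝ n (fun y => m (t, y)) x‖ ≤ M * lam * δ ^ ((1 : ℝ) / 2)) →
      ∀ N : ℕ, N ≤ Nbar → ∀ n : ℕ, n ≤ N → ∀ t ∈ Set.Icc (0 : ℝ) T, ∀ x : V3,
        ‖iteratedFDeriv ℝ n (fun y => Qcomm φ ℓ ϱ m (t, y)) x‖
          ≤ C * ℓ ^ ((1 : ℝ) - N) * (lam * δ ^ ((1 : ℝ) / 2)) ^ 2 := by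
  obtain ⟨C, hC, hbound⟩ := statement10_general hφ.1 hφ.hasCompactSupport hφ.even hφ.apply_zero
    Nbar (isCompact_Icc (a := 0) (b := T)) hϱ hϱper fun tx => (hε₀.trans_le (hϱlow tx)).ne'
  refine ⟨C * M ^ 2, by positivity, ?_⟩
  intro lam δ ℓ _ _ _ _ hℓ₀ hℓ₁ m hm hmper _ hm₁ N hN n hn t ht x
  refine (hbound _ ℓ hℓ₀ hℓ₁ m (fun t _ => hm.comp (contDiff_prodMk_right t)) hmper hm₁ N hN n hn
    t ht x).trans_eq ?_
  ring

end Main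
end
end

section
/- Let N ≥ 1 be an integer and C₀ > 1. Let a ∈ C^∞(𝕋³;ℝ) and let ξ : ℝ³ → ℝ³ be smooth with ξ(x + 2πv) − ξ(x) ∈ 2πℤ³ for all x ∈ ℝ³ and v ∈ ℤ³ (so that x ↦ e^{i k·ξ(x)} is well defined on 𝕋³ for every k ∈ ℤ³), and assume that for every x the matrix ∇ξ(x) satisfies ‖∇ξ(x)‖ ≤ C₀ and is invertible with ‖(∇ξ(x))^{−1}‖ ≤ C₀. Then there is a constant C = C(C₀, N), independent of k, such that for every k ∈ ℤ³ \ {0}, |∫_{𝕋³} a(x) e^{i k·ξ(x)} dx| ≤ C (‖a‖_N + ‖a‖₀ ‖∇ξ‖_N) / |k|^N. -/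
open MeasureTheory

noncomputable section

/-- A function on `ℝ³` is (`2π`-)periodic, i.e. descends to the torus `𝕋³`. -/
def PerSpace {α : Type*} (f : V3 → α) : Prop :=
  ∀ (x : V3) (v : Fin 3 → ℤ), f (fun i => x i + 2 * Real.pi * v i) = f x

/-!
Integrate by parts `N` times along the vector field `b = (∇ξ)⁻¹ k / |k|²`, for which
`∂_b (k · ξ) = 1`. A single frequency `r`, with `r ^ N = ‖a‖_N / ‖a‖₀ + ‖∇ξ‖_N`, measures all the
derivatives that arise: by Landau's interpolation inequality, those of order `j` of `a` and of `∇ξ`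
are bounded by `‖a‖₀ r ^ j` and by `r ^ j`, up to constants, and the latter bound passes to
`(∇ξ)⁻¹`. Each integration by parts thus costs a factor `r / |k|`, and altogether the integral is at
most a constant times `‖a‖₀ r ^ N / |k| ^ N = (‖a‖_N + ‖a‖₀ ‖∇ξ‖_N) / |k| ^ N`.
-/

open scoped NNReal

section Interpolation

theorem le_max_endpoints_of_sq_le_mul {u : ℕ → ℝ} (hu : ∀ j, 0 ≤ u j) {N : ℕ}
    (h : ∀ j, j + 2 ≤ N → u (j + 1) ^ 2 ≤ u j * u (j + 2)) {j : ℕ} (hj : j ≤ N) :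
    u j ≤ max (u 0) (u N) := by
  induction N generalizing j with
  | zero => simp [Nat.le_zero.1 hj]
  | succ N ih =>
    have ih {i : ℕ} (hi : i ≤ N) : u i ≤ max (u 0) (u N) := ih (fun i hi => h i (by lia)) hi
    have last_step : u N ≤ max (u 0) (u (N + 1)) := by
      rcases le_or_gt (u N) (u 0) with hN | hN
      · exact hN.trans (le_max_left _ _)
      obtain ⟨M, rfl⟩ : ∃ M, N = M + 1 :=
        Nat.exists_eq_succ_of_ne_zero fun h0 => hN.ne (by rw [h0])
      have hM : u M ≤ u (M + 1) := (ih M.le_succ).trans_eq (max_eq_right hN.le)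
      have hpos : 0 < u (M + 1) := (hu 0).trans_lt hN
      refine le_max_of_le_right (le_of_mul_le_mul_left ?_ hpos)
      calc u (M + 1) * u (M + 1) = u (M + 1) ^ 2 := (sq _).symm
        _ ≤ u M * u (M + 2) := h M le_rfl
        _ ≤ u (M + 1) * u (M + 2) := by gcongr; exact hu _
    rcases hj.eq_or_lt with rfl | hj
    · exact le_max_right _ _
    · exact (ih (Nat.le_of_lt_succ hj)).trans (max_le (le_max_left _ _) last_step)

theorem le_pow_mul_geometric_of_sq_le_mul {u : ℕ → ℝ} (hu : ∀ j, 0 ≤ u j) {c r K : ℝ}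
    (hc : 1 ≤ c) (hr : 0 < r) {N : ℕ}
    (h : ∀ j, j + 2 ≤ N → u (j + 1) ^ 2 ≤ c ^ 2 * (u j * u (j + 2)))
    (h₀ : u 0 ≤ K) (hN : u N ≤ K * r ^ N) {j : ℕ} (hj : j ≤ N) :
    u j ≤ c ^ N ^ 2 * K * r ^ j := by
  have hK : 0 ≤ K := (hu 0).trans h₀
  have one_le (i : ℕ) : 1 ≤ c ^ i ^ 2 := one_le_pow₀ hc
  -- The second difference of `j ↦ j ^ 2` is `2`, so this weight absorbs the factor `c ^ 2`.
  let v : ℕ → ℝ := fun i => c ^ i ^ 2 * u i / r ^ i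
  have hv (i : ℕ) : 0 ≤ v i := by have := hu i; positivity
  have v_sq_le (i : ℕ) (hi : i + 2 ≤ N) : v (i + 1) ^ 2 ≤ v i * v (i + 2) := by
    calc v (i + 1) ^ 2 = c ^ (2 * (i + 1) ^ 2) * u (i + 1) ^ 2 / r ^ (2 * (i + 1)) := by
          simp only [v]; ring
      _ ≤ c ^ (2 * (i + 1) ^ 2) * (c ^ 2 * (u i * u (i + 2))) / r ^ (2 * (i + 1)) := by
          gcongr; exact h i hi
      _ = v i * v (i + 2) := by simp only [v]; field_simp; ring
  have v_le : v j ≤ c ^ N ^ 2 * K := by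
    refine (le_max_endpoints_of_sq_le_mul hv v_sq_le hj).trans (max_le ?_ ?_)
    · calc v 0 = u 0 := by simp [v]
        _ ≤ K := h₀
        _ ≤ c ^ N ^ 2 * K := le_mul_of_one_le_left hK (one_le N)
    · rw [div_le_iff₀ (by positivity), mul_assoc]
      gcongr
  calc u j ≤ c ^ j ^ 2 * u j := le_mul_of_one_le_left (hu j) (one_le j)
    _ = v j * r ^ j := by simp only [v]; field_simp
    _ ≤ c ^ N ^ 2 * K * r ^ j := by gcongr

variable {E F : Type*} [NormedAddCommGroup E] [NormedSpace ℝ E] [NormedAddCommGroup F]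
  [NormedSpace ℝ F] {g : E → F} {M : ℝ} {L : ℝ≥0}

theorem norm_fderiv_mul_le_of_lipschitzWith_fderiv (hg : Differentiable ℝ g)
    (hM : ∀ x, ‖g x‖ ≤ M) (hL : LipschitzWith L (fderiv ℝ g)) (x : E) {h : ℝ} (hh : 0 < h) :
    ‖fderiv ℝ g x‖ * h ≤ M + L * (h * h) := by
  have M_nonneg : 0 ≤ M := (norm_nonneg _).trans (hM x)
  have fderiv_near (y : E) (hy : y ∈ Metric.closedBall x h) :
      ‖fderiv ℝ g y - fderiv ℝ g x‖ ≤ L * h :=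
    (hL.norm_sub_le y x).trans (by gcongr; exact mem_closedBall_iff_norm.1 hy)
  rw [← le_div_iff₀ hh]
  refine ContinuousLinearMap.opNorm_le_of_unit_norm (𝕜 := ℝ) (by positivity) fun v hv => ?_
  have hhv : ‖h • v‖ = h := by rw [norm_smul, hv, Real.norm_of_nonneg hh.le, mul_one]
  have central_difference :
      ‖g (x + h • v) - g (x - h • v) - (2 * h) • fderiv ℝ g x v‖ ≤ L * h * (2 * h) := by
    have hdiff : x + h • v - (x - h • v) = (2 * h) • v := by module
    have := (convex_closedBall x h).norm_image_sub_le_of_norm_fderiv_le' (fun y _ => hg y)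
      fderiv_near (x := x - h • v) (y := x + h • v)
      (mem_closedBall_iff_norm.2 (by simp [hhv])) (mem_closedBall_iff_norm.2 (by simp [hhv]))
    rwa [hdiff, map_smul, norm_smul, hv, mul_one, Real.norm_of_nonneg (by positivity)] at this
  have two_mul_le : 2 * h * ‖fderiv ℝ g x v‖ ≤ 2 * M + L * h * (2 * h) := by
    calc 2 * h * ‖fderiv ℝ g x v‖ = ‖(2 * h) • fderiv ℝ g x v‖ := by
          rw [norm_smul, Real.norm_of_nonneg (by positivity)]
      _ ≤ ‖g (x + h • v)‖ + ‖g (x - h • v)‖ +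
            ‖g (x + h • v) - g (x - h • v) - (2 * h) • fderiv ℝ g x v‖ := by
          refine (norm_le_norm_add_norm_sub (g (x + h • v) - g (x - h • v)) _).trans ?_
          gcongr
          exact norm_sub_le (g (x + h • v)) (g (x - h • v))
      _ ≤ 2 * M + L * h * (2 * h) := by
          linarith [hM (x + h • v), hM (x - h • v), central_difference]
  rw [le_div_iff₀ hh]
  linarith

/-- Landau's inequality, from the discriminant of the preceding bound as a quadratic in `h`. -/
theorem sq_norm_fderiv_le_of_lipschitzWith_fderiv (hg : Differentiable ℝ g)
    (hM : ∀ x, ‖g x‖ ≤ M) (hL : LipschitzWith L (fderiv ℝ g)) (x : E) :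
    ‖fderiv ℝ g x‖ ^ 2 ≤ 4 * (M * L) := by
  have quadratic_nonneg (h : ℝ) : 0 ≤ L * (h * h) + -‖fderiv ℝ g x‖ * h + M := by
    rcases lt_or_ge 0 h with hh | hh
    · linarith [norm_fderiv_mul_le_of_lipschitzWith_fderiv hg hM hL x hh]
    · have M_nonneg : 0 ≤ M := (norm_nonneg _).trans (hM x)
      linarith [mul_nonneg L.coe_nonneg (mul_self_nonneg h),
        mul_nonneg_of_nonpos_of_nonpos (neg_nonpos.2 (norm_nonneg (fderiv ℝ g x))) hh]
  have := discrim_le_zero quadratic_nonneg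
  rw [discrim] at this
  linarith

theorem sq_norm_iteratedFDeriv_succ_le {f : E → F} {j : ℕ} {M₀ M₂ : ℝ}
    (hf : ContDiff ℝ (j + 2 : ℕ) f) (h₀ : ∀ x, ‖iteratedFDeriv ℝ j f x‖ ≤ M₀)
    (h₂ : ∀ x, ‖iteratedFDeriv ℝ (j + 2) f x‖ ≤ M₂) (x : E) :
    ‖iteratedFDeriv ℝ (j + 1) f x‖ ^ 2 ≤ 4 * (M₀ * M₂) := by
  lift M₂ to ℝ≥0 using (norm_nonneg _).trans (h₂ x)
  have differentiable_iteratedFDeriv {i : ℕ} (hi : i < j + 2) :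
      Differentiable ℝ (iteratedFDeriv ℝ i f) :=
    hf.differentiable_iteratedFDeriv (by exact_mod_cast hi)
  have lipschitz : LipschitzWith M₂ (fderiv ℝ (iteratedFDeriv ℝ j f)) := by
    rw [fderiv_iteratedFDeriv, ← one_mul M₂]
    refine (LinearIsometryEquiv.lipschitz _).comp (lipschitzWith_of_nnnorm_fderiv_le (𝕜 := ℝ)
      (differentiable_iteratedFDeriv (by lia)) fun y => ?_)
    rw [← NNReal.coe_le_coe, coe_nnnorm, norm_fderiv_iteratedFDeriv]
    exact h₂ y
  rw [← norm_fderiv_iteratedFDeriv]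
  exact sq_norm_fderiv_le_of_lipschitzWith_fderiv (differentiable_iteratedFDeriv (by lia))
    h₀ lipschitz x

/-- Landau's inequality makes the suprema of the derivatives log-convex up to a constant factor. -/
theorem norm_iteratedFDeriv_le_of_endpoints {f : E → F} {N : ℕ} (hf : ContDiff ℝ N f)
    (hbdd : ∀ j ≤ N, ∃ R, ∀ x, ‖iteratedFDeriv ℝ j f x‖ ≤ R) {K r : ℝ} (hr : 0 < r)
    (h₀ : ∀ x, ‖f x‖ ≤ K) (hN : ∀ x, ‖iteratedFDeriv ℝ N f x‖ ≤ K * r ^ N) {j : ℕ} (hj : j ≤ N)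
    (x : E) : ‖iteratedFDeriv ℝ j f x‖ ≤ 2 ^ N ^ 2 * K * r ^ j := by
  let M : ℕ → ℝ := fun i => ⨆ y, ‖iteratedFDeriv ℝ i f y‖
  have hM (i : ℕ) : 0 ≤ M i := Real.iSup_nonneg fun _ => norm_nonneg _
  have le_M {i : ℕ} (hi : i ≤ N) (y : E) : ‖iteratedFDeriv ℝ i f y‖ ≤ M i := by
    obtain ⟨R, hR⟩ := hbdd i hi
    exact le_ciSup (f := fun y => ‖iteratedFDeriv ℝ i f y‖) ⟨R, Set.forall_mem_range.2 hR⟩ y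
  have M_sq_le (i : ℕ) (hi : i + 2 ≤ N) : M (i + 1) ^ 2 ≤ 2 ^ 2 * (M i * M (i + 2)) := by
    have hfi : ContDiff ℝ (i + 2 : ℕ) f := hf.of_le (by exact_mod_cast hi)
    rw [← Real.le_sqrt (hM _) (mul_nonneg (by norm_num) (mul_nonneg (hM _) (hM _)))]
    refine ciSup_le fun y => Real.le_sqrt_of_sq_le ?_
    refine (sq_norm_iteratedFDeriv_succ_le hfi (le_M (by lia)) (le_M hi) y).trans_eq ?_
    norm_num
  exact (le_M hj x).trans (le_pow_mul_geometric_of_sq_le_mul hM one_le_two hr M_sq_le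
    (ciSup_le fun y => by simpa using h₀ y) (ciSup_le hN) hj)

end Interpolation

section DerivGrowthBound

variable {E F G H : Type*} [NormedAddCommGroup E] [NormedSpace ℝ E]
  [NormedAddCommGroup F] [NormedSpace ℝ F] [NormedAddCommGroup G] [NormedSpace ℝ G]
  [NormedAddCommGroup H] [NormedSpace ℝ H]

/-- `f` is `C^n`, and its derivatives of order `j ≤ n` grow at most geometrically, being bounded by
`K * r ^ j`. Recording only the amplitude `K` and the frequency `r` makes the class stable under
products and inverses without any combinatorics of the Leibniz and Faà di Bruno formulas. -/
structure DerivGrowthBound (n : ℕ) (K r : ℝ) (f : E → F) : Prop where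
  contDiff : ContDiff ℝ n f
  norm_iteratedFDeriv_le : ∀ j ≤ n, ∀ x, ‖iteratedFDeriv ℝ j f x‖ ≤ K * r ^ j

namespace DerivGrowthBound

variable {m n : ℕ} {K L r : ℝ} {f : E → F} {g : E → G}

theorem norm_le (hf : DerivGrowthBound n K r f) (x : E) : ‖f x‖ ≤ K := by
  simpa using hf.norm_iteratedFDeriv_le 0 n.zero_le x

theorem const_nonneg (hf : DerivGrowthBound n K r f) : 0 ≤ K :=
  (norm_nonneg _).trans (hf.norm_le 0)

theorem mono_order (hf : DerivGrowthBound n K r f) (hmn : m ≤ n) : DerivGrowthBound m K r f :=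
  ⟨hf.contDiff.of_le (by exact_mod_cast hmn),
    fun j hj => hf.norm_iteratedFDeriv_le j (hj.trans hmn)⟩

theorem mono_const (hf : DerivGrowthBound n K r f) (hr : 0 ≤ r) (hKL : K ≤ L) :
    DerivGrowthBound n L r f :=
  ⟨hf.contDiff, fun j hj x => (hf.norm_iteratedFDeriv_le j hj x).trans (by gcongr)⟩

theorem of_continuous (hf : Continuous f) (h₀ : ∀ x, ‖f x‖ ≤ K) : DerivGrowthBound 0 K r f :=
  ⟨contDiff_zero.2 hf, fun j hj x => by
    obtain rfl := Nat.le_zero.1 hj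
    simpa using h₀ x⟩

theorem fderiv (hf : DerivGrowthBound (n + 1) K r f) :
    DerivGrowthBound n (K * r) r (fderiv ℝ f) :=
  ⟨hf.contDiff.fderiv_right (by norm_cast), fun j hj x => by
    rw [norm_iteratedFDeriv_fderiv, mul_assoc, ← pow_succ']
    exact hf.norm_iteratedFDeriv_le (j + 1) (by lia) x⟩

theorem of_fderiv (hf : Differentiable ℝ f) (h₀ : ∀ x, ‖f x‖ ≤ K)
    (hf' : DerivGrowthBound n (K * r) r (_root_.fderiv ℝ f)) : DerivGrowthBound (n + 1) K r f where
  contDiff := by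
    push_cast
    exact contDiff_succ_iff_fderiv.2 ⟨hf, by simp, hf'.contDiff⟩
  norm_iteratedFDeriv_le
    | 0, _, x => by simpa using h₀ x
    | j + 1, hj, x => by
      rw [← norm_iteratedFDeriv_fderiv, pow_succ', ← mul_assoc]
      exact hf'.norm_iteratedFDeriv_le j (by lia) x

theorem of_endpoints (hf : ContDiff ℝ n f) (hbdd : ∀ j ≤ n, ∃ R, ∀ x, ‖iteratedFDeriv ℝ j f x‖ ≤ R)
    (hr : 0 < r) (h₀ : ∀ x, ‖f x‖ ≤ K) (hn : ∀ x, ‖iteratedFDeriv ℝ n f x‖ ≤ K * r ^ n) :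
    DerivGrowthBound n (2 ^ n ^ 2 * K) r f :=
  ⟨hf, fun _ hj => norm_iteratedFDeriv_le_of_endpoints hf hbdd hr h₀ hn hj⟩

theorem exists_common_frequency (hn : n ≠ 0) (hf : ContDiff ℝ n f) (hg : ContDiff ℝ n g) {x₀ : E}
    (hx₀ : f x₀ ≠ 0) {A₀ A G₀ G : ℝ} (hA₀ : ∀ x, ‖f x‖ ≤ A₀)
    (hA : ∀ x, ∀ j ≤ n, ‖iteratedFDeriv ℝ j f x‖ ≤ A) (hG₀ : ∀ x, ‖g x‖ ≤ G₀)
    (hG : ∀ x, ∀ j ≤ n, ‖iteratedFDeriv ℝ j g x‖ ≤ G) :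
    ∃ r, 0 < r ∧ A₀ * r ^ n = A + A₀ * G ∧ DerivGrowthBound n (2 ^ n ^ 2 * A₀) r f ∧
      DerivGrowthBound n (2 ^ n ^ 2 * max G₀ 1) r g := by
  have A₀_pos : 0 < A₀ := (norm_pos_iff.2 hx₀).trans_le (hA₀ x₀)
  have A_pos : 0 < A := (norm_pos_iff.2 hx₀).trans_le (by simpa using hA x₀ 0 n.zero_le)
  have G_nonneg : 0 ≤ G := (norm_nonneg _).trans (hG x₀ 0 n.zero_le)
  obtain ⟨r, hr, hrn⟩ : ∃ r : ℝ, 0 < r ∧ r ^ n = A / A₀ + G :=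
    ⟨(A / A₀ + G) ^ (n : ℝ)⁻¹, by positivity, Real.rpow_inv_natCast_pow (by positivity) hn⟩
  have A₀_mul : A₀ * r ^ n = A + A₀ * G := by rw [hrn]; field_simp
  have A_le : A ≤ A₀ * r ^ n := A₀_mul ▸ le_add_of_nonneg_right (by positivity)
  have G_le : G ≤ max G₀ 1 * r ^ n :=
    calc G ≤ r ^ n := hrn ▸ le_add_of_nonneg_left (by positivity)
      _ ≤ max G₀ 1 * r ^ n := le_mul_of_one_le_left (by positivity) (le_max_right _ _)
  exact ⟨r, hr, A₀_mul,
    of_endpoints hf (fun j hj => ⟨A, fun x => hA x j hj⟩) hr hA₀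
      fun x => (hA x n le_rfl).trans A_le,
    of_endpoints hg (fun j hj => ⟨G, fun x => hG x j hj⟩) hr
      (fun x => (hG₀ x).trans (le_max_left _ _)) fun x => (hG x n le_rfl).trans G_le⟩

theorem clm_comp (T : F →L[ℝ] G) (hf : DerivGrowthBound n K r f) :
    DerivGrowthBound n (‖T‖ * K) r fun x => T (f x) :=
  ⟨T.contDiff.comp hf.contDiff, fun j hj x => by
    refine (T.norm_iteratedFDeriv_comp_left hf.contDiff.contDiffAt (by exact_mod_cast hj)).trans ?_
    rw [mul_assoc]
    gcongr
    exact hf.norm_iteratedFDeriv_le j hj x⟩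

theorem bilinear (B : F →L[ℝ] G →L[ℝ] H) (hr : 0 ≤ r) (hf : DerivGrowthBound n K r f)
    (hg : DerivGrowthBound n L r g) :
    DerivGrowthBound n (2 ^ n * ‖B‖ * K * L) r fun x => B (f x) (g x) where
  contDiff := (B.contDiff.comp hf.contDiff).clm_apply hg.contDiff
  norm_iteratedFDeriv_le j hj x := by
    have hK := hf.const_nonneg
    have hL := hg.const_nonneg
    have leibniz_term_le (i : ℕ) (hi : i ∈ Finset.range (j + 1)) :
        (j.choose i : ℝ) * ‖iteratedFDeriv ℝ i f x‖ * ‖iteratedFDeriv ℝ (j - i) g x‖ ≤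
          j.choose i * (K * L * r ^ j) := by
      have hij : i ≤ j := Finset.mem_range_succ_iff.1 hi
      calc (j.choose i : ℝ) * ‖iteratedFDeriv ℝ i f x‖ * ‖iteratedFDeriv ℝ (j - i) g x‖
          ≤ j.choose i * (K * r ^ i) * (L * r ^ (j - i)) := by
            gcongr
            · exact hf.norm_iteratedFDeriv_le i (by lia) x
            · exact hg.norm_iteratedFDeriv_le (j - i) (by lia) x
        _ = j.choose i * (K * L * (r ^ i * r ^ (j - i))) := by ring
        _ = j.choose i * (K * L * r ^ j) := by rw [pow_mul_pow_sub r hij]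
    calc ‖iteratedFDeriv ℝ j (fun y => B (f y) (g y)) x‖
        ≤ ‖B‖ * ∑ i ∈ Finset.range (j + 1), (j.choose i : ℝ) * ‖iteratedFDeriv ℝ i f x‖ *
            ‖iteratedFDeriv ℝ (j - i) g x‖ :=
          B.norm_iteratedFDeriv_le_of_bilinear hf.contDiff hg.contDiff x (by exact_mod_cast hj)
      _ ≤ ‖B‖ * ∑ i ∈ Finset.range (j + 1), (j.choose i : ℝ) * (K * L * r ^ j) := by
          gcongr ‖B‖ * ?_
          exact Finset.sum_le_sum leibniz_term_le
      _ = ‖B‖ * (2 ^ j * (K * L * r ^ j)) := by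
          rw [← Finset.sum_mul, ← Nat.cast_sum, Nat.sum_range_choose]
          norm_cast
      _ ≤ ‖B‖ * (2 ^ n * (K * L * r ^ j)) := by gcongr; exact one_le_two
      _ = 2 ^ n * ‖B‖ * K * L * r ^ j := by ring

theorem smul {c : E → ℝ} (hr : 0 ≤ r) (hc : DerivGrowthBound n K r c)
    (hf : DerivGrowthBound n L r f) : DerivGrowthBound n (2 ^ n * K * L) r fun x => c x • f x := by
  have hK := hc.const_nonneg
  have hL := hf.const_nonneg
  refine (bilinear (ContinuousLinearMap.lsmul ℝ ℝ) hr hc hf).mono_const hr ?_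
  gcongr
  exact mul_le_of_le_one_right (by positivity) ContinuousLinearMap.opNorm_lsmul_le

end DerivGrowthBound

variable {R : Type*} [NormedRing R] [NormedAlgebra ℝ R] [HasSummableGeomSeries R] {A : E → R}

theorem hasFDerivAt_ringInverse_comp {x : E} (hA : DifferentiableAt ℝ A x) (hu : IsUnit (A x)) :
    HasFDerivAt (fun y => Ring.inverse (A y))
      (-(ContinuousLinearMap.mulLeftRight ℝ R (Ring.inverse (A x)) (Ring.inverse (A x))).comp
        (fderiv ℝ A x)) x := by
  obtain ⟨u, hu⟩ := hu
  have outer : HasFDerivAt Ring.inverse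
      (-ContinuousLinearMap.mulLeftRight ℝ R (Ring.inverse (A x)) (Ring.inverse (A x))) (A x) := by
    rw [← hu, Ring.inverse_unit]
    exact hasFDerivAt_ringInverse u
  simpa only [ContinuousLinearMap.neg_comp] using! outer.comp x hA.hasFDerivAt

set_option maxSynthPendingDepth 3 in
/-- Since `D(A⁻¹) = -A⁻¹ (DA) A⁻¹`, a bound of order `n` on `A⁻¹` yields one of order `n + 1`. -/
theorem DerivGrowthBound.exists_ringInverse (n : ℕ) (K C : ℝ) :
    ∃ L, ∀ (A : E → R) (r : ℝ), 0 ≤ r → DerivGrowthBound n K r A → (∀ x, IsUnit (A x)) →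
      (∀ x, ‖Ring.inverse (A x)‖ ≤ C) → DerivGrowthBound n L r fun x => Ring.inverse (A x) := by
  induction n with
  | zero =>
    refine ⟨C, fun A r _ hA hu hC => .of_continuous (continuous_iff_continuousAt.2 fun x => ?_) hC⟩
    obtain ⟨u, hu⟩ := hu x
    exact (hu ▸ NormedRing.inverse_continuousAt u).comp hA.contDiff.continuous.continuousAt
  | succ n ih =>
    obtain ⟨L, ih⟩ := ih
    let Φ : R →L[ℝ] R →L[ℝ] R →L[ℝ] R := ContinuousLinearMap.mulLeftRight ℝ R
    let Ψ : (R →L[ℝ] R) →L[ℝ] (E →L[ℝ] R) →L[ℝ] E →L[ℝ] R := -ContinuousLinearMap.compL ℝ E R R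
    refine ⟨max C (2 ^ n * ‖Ψ‖ * (2 ^ n * ‖Φ‖ * L * L) * K), fun A r hr hA hu hC => ?_⟩
    have hA_diff : Differentiable ℝ A := hA.contDiff.differentiable (by simp)
    have hasFDerivAt_inv (x : E) :=
      hasFDerivAt_ringInverse_comp (hA_diff x) (hu x)
    have hinv := ih A r hr (hA.mono_order n.le_succ) hu hC
    have hfderiv := DerivGrowthBound.bilinear Ψ hr (.bilinear Φ hr hinv hinv) hA.fderiv
    refine .of_fderiv (fun x => (hasFDerivAt_inv x).differentiableAt)
      (fun x => (hC x).trans (le_max_left _ _)) ?_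
    rw [funext fun x => (hasFDerivAt_inv x).fderiv]
    refine hfderiv.mono_const hr ?_
    rw [← mul_assoc]
    gcongr
    exact le_max_right _ _

end DerivGrowthBound

section Torus

variable {d : ℕ}

/-- The fundamental domain `[-π, π]^d` of the torus of dimension `d`. -/
def torusBox (d : ℕ) : Set (Fin d → ℝ) :=
  Set.Icc (fun _ => -Real.pi) fun _ => Real.pi

/-- `f` is `2π`-periodic in each coordinate, i.e. descends to the torus of dimension `d`. -/
def IsTorusPeriodic {α : Type*} (f : (Fin d → ℝ) → α) : Prop :=
  ∀ (x : Fin d → ℝ) (v : Fin d → ℤ), f (fun i => x i + 2 * Real.pi * v i) = f x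

/-- `ξ` is the lift of a map between tori of dimensions `d` and `m`. -/
def IsTorusLift {m : ℕ} (ξ : (Fin d → ℝ) → Fin m → ℝ) : Prop :=
  ∀ (x : Fin d → ℝ) (v : Fin d → ℤ), ∃ w : Fin m → ℤ,
    ξ (fun i => x i + 2 * Real.pi * v i) = fun i => ξ x i + 2 * Real.pi * w i

theorem isCompact_torusBox : IsCompact (torusBox d) :=
  isCompact_Icc

theorem volume_real_torusBox : volume.real (torusBox d) = (2 * Real.pi) ^ d := by
  rw [Measure.real, torusBox,
    Real.volume_Icc_pi_toReal (fun _ => neg_le_self Real.pi_pos.le)]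
  simp [two_mul]

theorem integral_sum_fderiv_single_eq_zero {E : Type*} [NormedAddCommGroup E] [NormedSpace ℝ E]
    {F : Fin d → (Fin d → ℝ) → E} (hF : ∀ i, ContDiff ℝ 1 (F i))
    (hper : ∀ i, IsTorusPeriodic (F i)) :
    ∫ x in torusBox d, ∑ i, fderiv ℝ (F i) x (Pi.single i 1) = 0 := by
  rcases d with _ | d
  · simp
  have hcont : Continuous fun x => ∑ i, fderiv ℝ (F i) x (Pi.single i 1) :=
    continuous_finsetSum _ fun i _ =>
      ((hF i).continuous_fderiv one_ne_zero).clm_apply continuous_const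
  rw [torusBox, integral_divergence_of_hasFDerivAt_off_countable' _ _
    (fun _ => neg_le_self Real.pi_pos.le) F (fun i => fderiv ℝ (F i)) ∅ Set.countable_empty
    (fun i => (hF i).continuous.continuousOn)
    (fun x _ i => ((hF i).differentiable one_ne_zero x).hasFDerivAt)
    (hcont.continuousOn.integrableOn_compact isCompact_Icc)]
  refine Finset.sum_eq_zero fun i _ => sub_eq_zero.2 ?_
  congr 1 with y
  rw [← hper i (i.insertNth (-Real.pi) y) (Pi.single i 1)]
  congr 1 with j
  refine Fin.succAboveCases i ?_ (fun l => ?_) j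
  · simp only [Fin.insertNth_apply_same, Pi.single_eq_same, Int.cast_one]
    ring
  · simp

namespace IsTorusPeriodic

variable {E : Type*} [NormedAddCommGroup E] [NormedSpace ℝ E]

theorem fderiv_of_add_const {f : (Fin d → ℝ) → E} (c : (Fin d → ℤ) → E)
    (hf : ∀ x v, f (fun i => x i + 2 * Real.pi * v i) = f x + c v) :
    IsTorusPeriodic (fderiv ℝ f) := fun x v => by
  have hshift : (fun y => f (y + fun i => 2 * Real.pi * v i)) = fun y => f y + c v :=
    funext fun y => hf y v
  rw [← fderiv_add_const (f := f) (x := x) (c v), ← hshift, fderiv_comp_add_right]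
  rfl

theorem fderiv {f : (Fin d → ℝ) → E} (hf : IsTorusPeriodic f) : IsTorusPeriodic (fderiv ℝ f) :=
  fderiv_of_add_const (fun _ => 0) fun x v => (hf x v).trans (add_zero _).symm

end IsTorusPeriodic

/-- The jump of `ξ` under a lattice translation is continuous with values in a lattice, hence
constant. -/
theorem IsTorusLift.isTorusPeriodic_fderiv {m : ℕ} {ξ : (Fin d → ℝ) → Fin m → ℝ} (hξ : Continuous ξ)
    (hlift : IsTorusLift ξ) : IsTorusPeriodic (fderiv ℝ ξ) := by
  let jump (v : Fin d → ℤ) (x : Fin d → ℝ) (i : Fin m) : ℝ :=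
    ξ (fun j => x j + 2 * Real.pi * v j) i - ξ x i
  have jump_mem (v : Fin d → ℤ) (i : Fin m) :
      Set.MapsTo (jump v · i) Set.univ (AddSubgroup.zmultiples (2 * Real.pi)) := fun x _ => by
    obtain ⟨w, hw⟩ := hlift x v
    exact AddSubgroup.mem_zmultiples_iff.2 ⟨w i, by simp only [jump, hw, zsmul_eq_mul]; ring⟩
  have jump_const (x : Fin d → ℝ) (v : Fin d → ℤ) : jump v x = jump v 0 := funext fun i =>
    isPreconnected_univ.constant_of_mapsTo
      (isDiscrete_iff_discreteTopology.2
        (inferInstanceAs (DiscreteTopology (AddSubgroup.zmultiples (2 * Real.pi)))))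
      (by fun_prop)
      (jump_mem v i) (Set.mem_univ x) (Set.mem_univ 0)
  refine .fderiv_of_add_const (fun v => jump v 0) fun x v => ?_
  rw [← jump_const x v]
  exact (add_sub_cancel _ _).symm

end Torus

section IntegrationByParts

variable {d : ℕ}

/-- The trace of an endomorphism of `ℝ^d`, as a continuous linear functional. -/
def traceCLM (d : ℕ) : ((Fin d → ℝ) →L[ℝ] Fin d → ℝ) →L[ℝ] ℝ :=
  ∑ i, (ContinuousLinearMap.proj (R := ℝ) (φ := fun _ : Fin d => ℝ) i).comp
    (ContinuousLinearMap.apply ℝ (Fin d → ℝ) (Pi.single i 1 : Fin d → ℝ))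

/-- The divergence of a vector field on `ℝ^d`. -/
def divergence (u : (Fin d → ℝ) → Fin d → ℝ) (x : Fin d → ℝ) : ℝ :=
  traceCLM d (fderiv ℝ u x)

theorem divergence_eq_sum (u : (Fin d → ℝ) → Fin d → ℝ) (x : Fin d → ℝ) :
    divergence u x = ∑ i, fderiv ℝ u x (Pi.single i 1) i := by
  simp [divergence, traceCLM]

theorem IsTorusPeriodic.divergence {u : (Fin d → ℝ) → Fin d → ℝ} (hu : IsTorusPeriodic u) :
    IsTorusPeriodic (divergence u) := fun x v =>
  congrArg (traceCLM d) (hu.fderiv x v)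

theorem DerivGrowthBound.divergence {n : ℕ} {K r : ℝ} {u : (Fin d → ℝ) → Fin d → ℝ}
    (hu : DerivGrowthBound (n + 1) K r u) :
    DerivGrowthBound n (‖traceCLM d‖ * (K * r)) r (divergence u) :=
  hu.fderiv.clm_comp (traceCLM d)

/-- The oscillating factor `e^{iφ}` of a real phase `φ`. -/
def expPhase {X : Type*} (φ : X → ℝ) (x : X) : ℂ :=
  Complex.exp (Complex.I * (φ x : ℂ))

theorem norm_expPhase {X : Type*} (φ : X → ℝ) (x : X) : ‖expPhase φ x‖ = 1 := by
  rw [expPhase, mul_comm, Complex.norm_exp_ofReal_mul_I]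

theorem contDiff_expPhase {E : Type*} [NormedAddCommGroup E] [NormedSpace ℝ E] {n : ℕ∞}
    {φ : E → ℝ} (hφ : ContDiff ℝ n φ) : ContDiff ℝ n (expPhase φ) :=
  (contDiff_const.mul (Complex.ofRealCLM.contDiff.comp hφ)).cexp

theorem hasFDerivAt_expPhase {E : Type*} [NormedAddCommGroup E] [NormedSpace ℝ E] {φ : E → ℝ}
    {x : E} (hφ : DifferentiableAt ℝ φ x) :
    HasFDerivAt (expPhase φ)
      (expPhase φ x • Complex.I • Complex.ofRealCLM.comp (fderiv ℝ φ x)) x :=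
  ((Complex.ofRealCLM.hasFDerivAt.comp x hφ.hasFDerivAt).const_mul Complex.I).cexp

variable {φ : (Fin d → ℝ) → ℝ}

theorem sum_fderiv_mul_expPhase {u : (Fin d → ℝ) → Fin d → ℝ} {x : Fin d → ℝ}
    (hu : DifferentiableAt ℝ u x) (hφ : DifferentiableAt ℝ φ x) :
    ∑ i, fderiv ℝ (fun y => (u y i : ℂ) * expPhase φ y) x (Pi.single i 1) =
      (divergence u x : ℂ) * expPhase φ x +
        Complex.I * ((fderiv ℝ φ x (u x) : ℂ) * expPhase φ x) := by
  have hasFDerivAt_coord (i : Fin d) : HasFDerivAt (fun y => (u y i : ℂ))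
      (Complex.ofRealCLM.comp ((ContinuousLinearMap.proj i).comp (fderiv ℝ u x))) x :=
    Complex.ofRealCLM.hasFDerivAt.comp x (hasFDerivAt_pi'.1 hu.hasFDerivAt i)
  have fderiv_term (i : Fin d) :
      fderiv ℝ (fun y => (u y i : ℂ) * expPhase φ y) x (Pi.single i 1) =
        (fderiv ℝ u x (Pi.single i 1) i : ℂ) * expPhase φ x +
          Complex.I * ((u x i * fderiv ℝ φ x (Pi.single i 1) : ℝ) * expPhase φ x) := by
    rw [((hasFDerivAt_coord i).fun_mul (hasFDerivAt_expPhase hφ)).fderiv]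
    simp only [add_apply, smul_apply, ContinuousLinearMap.comp_apply, Complex.ofRealCLM_apply,
      smul_eq_mul, ContinuousLinearMap.proj_apply, Complex.ofReal_mul]
    ring
  have fderiv_phase : fderiv ℝ φ x (u x) = ∑ i, u x i * fderiv ℝ φ x (Pi.single i 1) := by
    conv_lhs => rw [pi_eq_sum_univ' (u x)]
    simp
  simp only [fderiv_term, fderiv_phase, divergence_eq_sum, Complex.ofReal_sum,
    Finset.sum_add_distrib, Finset.sum_mul, Finset.mul_sum]

theorem integral_fderiv_mul_expPhase {u : (Fin d → ℝ) → Fin d → ℝ} (hu : ContDiff ℝ 1 u)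
    (hφ : ContDiff ℝ 1 φ) (hu_per : IsTorusPeriodic u) (hφ_per : IsTorusPeriodic (expPhase φ)) :
    ∫ x in torusBox d, (fderiv ℝ φ x (u x) : ℂ) * expPhase φ x =
      Complex.I * ∫ x in torusBox d, (divergence u x : ℂ) * expPhase φ x := by
  have hexp : ContDiff ℝ 1 (expPhase φ) := contDiff_expPhase hφ
  have hfield (i : Fin d) : ContDiff ℝ 1 fun y => (u y i : ℂ) * expPhase φ y :=
    (Complex.ofRealCLM.contDiff.comp (contDiff_pi.1 hu i)).mul hexp
  have hzero := integral_sum_fderiv_single_eq_zero hfield fun i x v => by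
    simp only [hu_per x v, hφ_per x v]
  have integrable_div :
      IntegrableOn (fun x => (divergence u x : ℂ) * expPhase φ x) (torusBox d) :=
    ((Complex.continuous_ofReal.comp ((traceCLM d).continuous.comp
      (hu.continuous_fderiv one_ne_zero))).mul hexp.continuous).continuousOn.integrableOn_compact
        isCompact_torusBox
  have integrable_phase :
      IntegrableOn (fun x => (fderiv ℝ φ x (u x) : ℂ) * expPhase φ x) (torusBox d) :=
    ((Complex.continuous_ofReal.comp ((hφ.continuous_fderiv one_ne_zero).clm_apply
      hu.continuous)).mul hexp.continuous).continuousOn.integrableOn_compact isCompact_torusBox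
  simp only [sum_fderiv_mul_expPhase (hu.differentiable one_ne_zero _)
    (hφ.differentiable one_ne_zero _)] at hzero
  rw [integral_add integrable_div (integrable_phase.const_mul _), integral_const_mul] at hzero
  linear_combination -Complex.I * hzero + Complex.I_sq *
    ∫ x in torusBox d, (fderiv ℝ φ x (u x) : ℂ) * expPhase φ x

theorem norm_integral_mul_expPhase_le_of_norm_le {f : (Fin d → ℝ) → ℝ} {K : ℝ}
    (hf : ∀ x, ‖f x‖ ≤ K) :
    ‖∫ x in torusBox d, (f x : ℂ) * expPhase φ x‖ ≤ (2 * Real.pi) ^ d * K := by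
  rw [mul_comm, ← volume_real_torusBox]
  refine norm_setIntegral_le_of_norm_le_const isCompact_torusBox.measure_lt_top fun x _ => ?_
  rw [norm_mul, norm_expPhase, mul_one, Complex.norm_real]
  exact hf x

/-- Along a field `b` with `∂_b φ = 1`, each of the `n` integrations by parts replaces the amplitude
`f` by the divergence of `f b`. -/
theorem norm_integral_mul_expPhase_le {N : ℕ} {b : (Fin d → ℝ) → Fin d → ℝ} {L r : ℝ}
    (hr : 0 ≤ r) (hb : DerivGrowthBound N L r b) (hφ : ContDiff ℝ 1 φ) (hb_per : IsTorusPeriodic b)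
    (hφ_per : IsTorusPeriodic (expPhase φ)) (hbφ : ∀ x, fderiv ℝ φ x (b x) = 1) {n : ℕ}
    (hn : n ≤ N) {f : (Fin d → ℝ) → ℝ} {K : ℝ} (hf : DerivGrowthBound n K r f)
    (hf_per : IsTorusPeriodic f) :
    ‖∫ x in torusBox d, (f x : ℂ) * expPhase φ x‖ ≤
      (2 * Real.pi) ^ d * K * (‖traceCLM d‖ * 2 ^ N * L * r) ^ n := by
  induction n generalizing f K with
  | zero => simpa using norm_integral_mul_expPhase_le_of_norm_le hf.norm_le
  | succ n ih =>
    have hK := hf.const_nonneg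
    have hL := hb.const_nonneg
    let u : (Fin d → ℝ) → Fin d → ℝ := fun y => f y • b y
    have hu : DerivGrowthBound (n + 1) (2 ^ N * K * L) r u :=
      (hf.smul hr (hb.mono_order hn)).mono_const hr (by gcongr; exact one_le_two)
    have hu_per : IsTorusPeriodic u := fun x v => by simp only [u, hf_per x v, hb_per x v]
    have fderiv_phase (x : Fin d → ℝ) : fderiv ℝ φ x (u x) = f x := by simp [u, hbφ]
    have by_parts := integral_fderiv_mul_expPhase
      (hu.contDiff.of_le (by exact_mod_cast Nat.le_add_left 1 n)) hφ hu_per hφ_per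
    simp only [fderiv_phase] at by_parts
    calc ‖∫ x in torusBox d, (f x : ℂ) * expPhase φ x‖
        = ‖∫ x in torusBox d, (divergence u x : ℂ) * expPhase φ x‖ := by
          rw [by_parts, norm_mul, Complex.norm_I, one_mul]
      _ ≤ (2 * Real.pi) ^ d * (‖traceCLM d‖ * (2 ^ N * K * L * r)) *
            (‖traceCLM d‖ * 2 ^ N * L * r) ^ n := ih (by lia) hu.divergence hu_per.divergence
      _ = (2 * Real.pi) ^ d * K * (‖traceCLM d‖ * 2 ^ N * L * r) ^ (n + 1) := by ring

end IntegrationByParts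

section OscillatoryIntegral

theorem isUnit_and_norm_ringInverse_le {R : Type*} [NormedRing R] {A B : R} {C : ℝ}
    (hAB : A * B = 1) (hBA : B * A = 1) (hB : ‖B‖ ≤ C) : IsUnit A ∧ ‖Ring.inverse A‖ ≤ C := by
  let u : Rˣ := ⟨A, B, hAB, hBA⟩
  have inverse_eq : Ring.inverse A = B := Ring.inverse_unit u
  exact ⟨u.isUnit, inverse_eq ▸ hB⟩

theorem exists_dotProduct_eq_one_and_norm_le {ι : Type*} [Fintype ι] {k : ι → ℝ} (hk : k ≠ 0) :
    ∃ q : ι → ℝ, k ⬝ᵥ q = 1 ∧ ‖q‖ ≤ (√(∑ i, k i ^ 2))⁻¹ := by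
  set κ : ℝ := √(∑ i, k i ^ 2) with hκ
  have sq_κ : κ ^ 2 = k ⬝ᵥ k := by
    rw [hκ, Real.sq_sqrt (by positivity), dotProduct]
    simp only [sq]
  have abs_le_κ (i : ι) : |k i| ≤ κ := Real.abs_le_sqrt
    (Finset.single_le_sum (f := fun i => k i ^ 2) (fun _ _ => sq_nonneg _) (Finset.mem_univ i))
  have κ_pos : 0 < κ := by
    obtain ⟨i, hi⟩ := Function.ne_iff.1 hk
    exact (abs_pos.2 hi).trans_le (abs_le_κ i)
  refine ⟨(κ ^ 2)⁻¹ • k, ?_, ?_⟩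
  · rw [dotProduct_smul, ← sq_κ, smul_eq_mul, inv_mul_cancel₀ (by positivity)]
  · calc ‖(κ ^ 2)⁻¹ • k‖ = (κ ^ 2)⁻¹ * ‖k‖ := by
          rw [norm_smul, Real.norm_of_nonneg (by positivity)]
      _ ≤ (κ ^ 2)⁻¹ * κ := by
          gcongr
          exact (pi_norm_le_iff_of_nonneg κ_pos.le).2 abs_le_κ
      _ = κ⁻¹ := by field_simp

variable {d : ℕ}

theorem IsTorusLift.isTorusPeriodic_expPhase {m : ℕ} {ξ : (Fin d → ℝ) → Fin m → ℝ}
    (hlift : IsTorusLift ξ) (k : Fin m → ℤ) :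
    IsTorusPeriodic (expPhase fun x => ∑ i, (k i : ℝ) * ξ x i) := fun x v => by
  obtain ⟨w, hw⟩ := hlift x v
  refine Complex.exp_eq_exp_iff_exists_int.2 ⟨∑ i, k i * w i, ?_⟩
  simp only [hw]
  push_cast
  simp only [mul_add, Finset.sum_add_distrib, Finset.mul_sum, Finset.sum_mul]
  congr 1
  exact Finset.sum_congr rfl fun i _ => by ring

variable {N : ℕ} {a : (Fin d → ℝ) → ℝ} {ξ : (Fin d → ℝ) → Fin d → ℝ}

/-- The field `b = (Dξ)⁻¹ q` satisfies `∂_b (ℓ ∘ ξ) = ℓ q = 1`. -/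
theorem norm_integral_mul_expPhase_comp_le {K L r : ℝ} (hr : 0 ≤ r)
    (ha : DerivGrowthBound N K r a) (ha_per : IsTorusPeriodic a) (hξ : ContDiff ℝ 1 ξ)
    (hξ_per : IsTorusPeriodic (fderiv ℝ ξ)) (hunit : ∀ x, IsUnit (fderiv ℝ ξ x))
    (hinv : DerivGrowthBound N L r fun x => Ring.inverse (fderiv ℝ ξ x))
    {ℓ : (Fin d → ℝ) →L[ℝ] ℝ} (hℓ_per : IsTorusPeriodic (expPhase fun x => ℓ (ξ x)))
    {q : Fin d → ℝ} (hq : ℓ q = 1) :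
    ‖∫ x in torusBox d, (a x : ℂ) * expPhase (fun y => ℓ (ξ y)) x‖ ≤
      (2 * Real.pi) ^ d * K * (‖traceCLM d‖ * 2 ^ N * (‖q‖ * L) * r) ^ N := by
  let eval : ((Fin d → ℝ) →L[ℝ] Fin d → ℝ) →L[ℝ] Fin d → ℝ :=
    ContinuousLinearMap.apply ℝ (Fin d → ℝ) q
  have norm_eval_le : ‖eval‖ ≤ ‖q‖ := ContinuousLinearMap.opNorm_le_bound _ (norm_nonneg q)
    fun T => (T.le_opNorm q).trans_eq (mul_comm _ _)
  have hb : DerivGrowthBound N (‖q‖ * L) r fun x => Ring.inverse (fderiv ℝ ξ x) q :=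
    (hinv.clm_comp eval).mono_const hr (mul_le_mul_of_nonneg_right norm_eval_le hinv.const_nonneg)
  refine norm_integral_mul_expPhase_le hr hb (ℓ.contDiff.comp hξ)
    (fun x v => by simp only [hξ_per x v]) hℓ_per (fun x => ?_) le_rfl ha ha_per
  have fderiv_apply_inverse : fderiv ℝ ξ x (Ring.inverse (fderiv ℝ ξ x) q) = q :=
    DFunLike.congr_fun (Ring.mul_inverse_cancel _ (hunit x)) q
  rw [(ℓ.hasFDerivAt.comp x (hξ.differentiable one_ne_zero x).hasFDerivAt).fderiv,
    ContinuousLinearMap.comp_apply, fderiv_apply_inverse, hq]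

theorem exists_norm_integral_mul_expPhase_comp_le (d : ℕ) (hN : N ≠ 0) (C₀ : ℝ) :
    ∃ C, 0 < C ∧ ∀ a : (Fin d → ℝ) → ℝ, ContDiff ℝ N a → IsTorusPeriodic a →
      ∀ ξ : (Fin d → ℝ) → Fin d → ℝ, ContDiff ℝ (N + 1) ξ → IsTorusPeriodic (fderiv ℝ ξ) →
      (∀ x, ‖fderiv ℝ ξ x‖ ≤ C₀) →
      (∀ x, IsUnit (fderiv ℝ ξ x) ∧ ‖Ring.inverse (fderiv ℝ ξ x)‖ ≤ C₀) →
      ∀ A₀ AN GN : ℝ, (∀ x, |a x| ≤ A₀) → (∀ x, ∀ n ≤ N, ‖iteratedFDeriv ℝ n a x‖ ≤ AN) →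
      (∀ x, ∀ n ≤ N, ‖iteratedFDeriv ℝ n (fderiv ℝ ξ) x‖ ≤ GN) →
      ∀ (ℓ : (Fin d → ℝ) →L[ℝ] ℝ) (q : Fin d → ℝ), ℓ q = 1 →
      IsTorusPeriodic (expPhase fun x => ℓ (ξ x)) →
      ‖∫ x in torusBox d, (a x : ℂ) * expPhase (fun y => ℓ (ξ y)) x‖ ≤
        C * (AN + A₀ * GN) * ‖q‖ ^ N := by
  obtain ⟨L, hL⟩ := DerivGrowthBound.exists_ringInverse (E := Fin d → ℝ)
    (R := (Fin d → ℝ) →L[ℝ] Fin d → ℝ) N (2 ^ N ^ 2 * max C₀ 1) C₀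
  refine ⟨(2 * Real.pi) ^ d * 2 ^ N ^ 2 * (‖traceCLM d‖ * 2 ^ N * |L|) ^ N + 1, by positivity, ?_⟩
  intro a ha ha_per ξ hξ hξ_per hC₀ hinv A₀ AN GN hA₀ hAN hGN ℓ q hq hℓ_per
  have A₀_nonneg : 0 ≤ A₀ := (abs_nonneg _).trans (hA₀ 0)
  have GN_nonneg : 0 ≤ GN := (norm_nonneg _).trans (hGN 0 0 N.zero_le)
  have AN_nonneg : 0 ≤ AN := (norm_nonneg _).trans (hAN 0 0 N.zero_le)
  by_cases ha_zero : ∀ x, a x = 0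
  · simp only [ha_zero, Complex.ofReal_zero, zero_mul, integral_zero, norm_zero]
    positivity
  obtain ⟨x₀, hx₀⟩ := not_forall.1 ha_zero
  obtain ⟨r, hr, A₀_mul, amplitude, gradient⟩ := DerivGrowthBound.exists_common_frequency hN ha
    (hξ.fderiv_right le_rfl) hx₀ hA₀ hAN hC₀ hGN
  have inverse_gradient : DerivGrowthBound N |L| r fun x => Ring.inverse (fderiv ℝ ξ x) :=
    (hL _ r hr.le gradient (fun x => (hinv x).1) fun x => (hinv x).2).mono_const hr.le
      (le_abs_self L)
  calc ‖∫ x in torusBox d, (a x : ℂ) * expPhase (fun y => ℓ (ξ y)) x‖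
      ≤ (2 * Real.pi) ^ d * (2 ^ N ^ 2 * A₀) * (‖traceCLM d‖ * 2 ^ N * (‖q‖ * |L|) * r) ^ N :=
        norm_integral_mul_expPhase_comp_le hr.le amplitude ha_per
          (hξ.of_le le_add_self) hξ_per (fun x => (hinv x).1) inverse_gradient hℓ_per hq
    _ = (2 * Real.pi) ^ d * 2 ^ N ^ 2 * (‖traceCLM d‖ * 2 ^ N * |L|) ^ N * (A₀ * r ^ N) *
          ‖q‖ ^ N := by ring
    _ ≤ _ := by
        rw [A₀_mul]
        gcongr
        exact le_add_of_nonneg_right zero_le_one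

theorem statement12_general (d : ℕ) (hN : N ≠ 0) (C₀ : ℝ) :
    ∃ C : ℝ, 0 < C ∧
      ∀ a : (Fin d → ℝ) → ℝ, ContDiff ℝ N a → IsTorusPeriodic a →
      ∀ ξ : (Fin d → ℝ) → Fin d → ℝ, ContDiff ℝ (N + 1) ξ → IsTorusLift ξ →
        (∀ x, ‖fderiv ℝ ξ x‖ ≤ C₀) →
        (∀ x, ∃ B : (Fin d → ℝ) →L[ℝ] Fin d → ℝ,
          (fderiv ℝ ξ x).comp B = ContinuousLinearMap.id ℝ (Fin d → ℝ) ∧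
          B.comp (fderiv ℝ ξ x) = ContinuousLinearMap.id ℝ (Fin d → ℝ) ∧ ‖B‖ ≤ C₀) →
      ∀ A₀ AN GN : ℝ,
        (∀ x, |a x| ≤ A₀) →
        (∀ x, ∀ n ≤ N, ‖iteratedFDeriv ℝ n a x‖ ≤ AN) →
        (∀ x, ∀ n ≤ N, ‖iteratedFDeriv ℝ n (fderiv ℝ ξ) x‖ ≤ GN) →
      ∀ k : Fin d → ℤ, k ≠ 0 →
        ‖∫ x in torusBox d, (a x : ℂ) * expPhase (fun y => ∑ i, (k i : ℝ) * ξ y i) x‖ ≤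
          C * (AN + A₀ * GN) / √(∑ i, (k i : ℝ) ^ 2) ^ N := by
  obtain ⟨C, hC, hbound⟩ := exists_norm_integral_mul_expPhase_comp_le d hN C₀
  refine ⟨C, hC, fun a ha ha_per ξ hξ hlift hC₀ hinv A₀ AN GN hA₀ hAN hGN k hk => ?_⟩
  have A₀_nonneg : 0 ≤ A₀ := (abs_nonneg _).trans (hA₀ 0)
  have GN_nonneg : 0 ≤ GN := (norm_nonneg _).trans (hGN 0 0 N.zero_le)
  have AN_nonneg : 0 ≤ AN := (norm_nonneg _).trans (hAN 0 0 N.zero_le)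
  have hk : (fun i => (k i : ℝ)) ≠ 0 := fun h =>
    hk (funext fun i => Int.cast_eq_zero.1 (congrFun h i))
  obtain ⟨q, hq, norm_q_le⟩ := exists_dotProduct_eq_one_and_norm_le hk
  let ℓ : (Fin d → ℝ) →L[ℝ] ℝ :=
    LinearMap.toContinuousLinearMap (dotProductBilin ℝ ℝ fun i => (k i : ℝ))
  have hξ_per := hlift.isTorusPeriodic_fderiv hξ.continuous
  have hunit (x : Fin d → ℝ) :
      IsUnit (fderiv ℝ ξ x) ∧ ‖Ring.inverse (fderiv ℝ ξ x)‖ ≤ C₀ := by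
    obtain ⟨B, hAB, hBA, hB⟩ := hinv x
    exact isUnit_and_norm_ringInverse_le hAB hBA hB
  calc _ ≤ C * (AN + A₀ * GN) * ‖q‖ ^ N :=
        hbound a ha ha_per ξ hξ hξ_per hC₀ hunit A₀ AN GN hA₀ hAN hGN ℓ q hq
          (hlift.isTorusPeriodic_expPhase k)
    _ ≤ C * (AN + A₀ * GN) * (√(∑ i, (k i : ℝ) ^ 2))⁻¹ ^ N := by gcongr
    _ = C * (AN + A₀ * GN) / √(∑ i, (k i : ℝ) ^ 2) ^ N := by rw [inv_pow, ← div_eq_mul_inv]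

end OscillatoryIntegral

/-- **Stationary phase estimate.**  Let `a` be smooth and periodic and let `ξ : ℝ³ → ℝ³`
be a smooth phase, periodic modulo `2πℤ³`, with `‖∇ξ‖ ≤ C₀` and `∇ξ` pointwise invertible
with `‖(∇ξ)⁻¹‖ ≤ C₀`.  Then there is `C = C(C₀, N)`, independent of `k`, with
`|∫_{𝕋³} a e^{i k·ξ} dx| ≤ C (‖a‖_N + ‖a‖₀ ‖∇ξ‖_N) / |k|^N` for all `k ∈ ℤ³ \ {0}`. -/
theorem statement12 (N : ℕ) (hN : 1 ≤ N) (C₀ : ℝ) (hC₀ : 1 < C₀) :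
    ∃ C : ℝ, 0 < C ∧
      ∀ a : V3 → ℝ, ContDiff ℝ (⊤ : ℕ∞) a → PerSpace a →
      ∀ ξ : V3 → V3, ContDiff ℝ (⊤ : ℕ∞) ξ →
        (∀ (x : V3) (v : Fin 3 → ℤ), ∃ w : Fin 3 → ℤ,
          (ξ (fun i => x i + 2 * Real.pi * v i)) = fun i => ξ x i + 2 * Real.pi * w i) →
        (∀ x : V3, ‖fderiv ℝ ξ x‖ ≤ C₀) →
        (∀ x : V3, ∃ B : V3 →L[ℝ] V3,
          (fderiv ℝ ξ x).comp B = ContinuousLinearMap.id ℝ V3 ∧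
          B.comp (fderiv ℝ ξ x) = ContinuousLinearMap.id ℝ V3 ∧ ‖B‖ ≤ C₀) →
      ∀ A₀ AN GN : ℝ,
        (∀ x : V3, |a x| ≤ A₀) →
        (∀ x : V3, ∀ n : ℕ, n ≤ N → ‖iteratedFDeriv ℝ n a x‖ ≤ AN) →
        (∀ x : V3, ∀ n : ℕ, n ≤ N →
          ‖iteratedFDeriv ℝ n (fun y => fderiv ℝ ξ y) x‖ ≤ GN) →
      ∀ k : Fin 3 → ℤ, k ≠ 0 →
        ‖∫ x in T3, (a x : ℂ) * Complex.exp (Complex.I * ((∑ i, (k i : ℝ) * ξ x i : ℝ) : ℂ))‖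
          ≤ C * (AN + A₀ * GN) / (Real.sqrt (∑ i, ((k i : ℝ)) ^ 2)) ^ N := by
  obtain ⟨C, hC, hbound⟩ := statement12_general 3 (Nat.one_le_iff_ne_zero.1 hN) C₀
  exact ⟨C, hC, fun a ha ha_per ξ hξ =>
    hbound a (ha.of_le (mod_cast le_top)) ha_per ξ (hξ.of_le (mod_cast le_top))⟩
end
end
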